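/- arXiv:1803.04568 — 2 statements merged into one kernel-verified Lean document; each statement's English description precedes it below -/
import Mathlib

section
/- There exists a function f of class C¹ (in particular Lipschitz) on ℝ² that vanishes outside the square [-1,1]² such that the repeated distributional derivatives ∂_x² f and ∂_y² f belong to L¹(ℝ²), but the mixed distributional derivative ∂_x∂_y f is not (represented by a function) in L¹(ℝ²). -/
open MeasureTheory Real

noncomputable section

/-- First partial derivative (with respect to the first coordinate) on `ℝ²`. -/
def pd1 (f : ℝ × ℝ → ℝ) (p : ℝ × ℝ) : ℝ := fderiv ℝ f p (1, 0)

/-- Second partial derivative (with respect to the second coordinate) on `ℝ²`. -/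
def pd2 (f : ℝ × ℝ → ℝ) (p : ℝ × ℝ) : ℝ := fderiv ℝ f p (0, 1)

/-- Test functions: smooth compactly supported functions on `ℝ²`. -/
def IsTest (φ : ℝ × ℝ → ℝ) : Prop := ContDiff ℝ (⊤ : ℕ∞) φ ∧ HasCompactSupport φ

/-!
By the uniform boundedness principle it is enough to find test functions `u` supported in a fixed
compact set, bounded in `C¹` and with `∂_v² u` and `∂_w² u` bounded in `L¹`, for which the `L¹` norm
of `∂_w ∂_v u` is arbitrarily large: some absolutely convergent combination of them then has a mixed
derivative that is unbounded on the test functions with values in `[-1, 1]`.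

Such functions are built by iterated lamination. Let `ψ` be periodic with `1 + ψ'' ≥ 0`, let
`p ≥ 0`, and let the linear form `ℓ` satisfy `ℓ v = 1` and `ℓ w = ±1`. The function
`N⁻² p(x) ψ(N ℓ(x))` is small in `C¹`, and for large `N` its two repeated derivatives are both close
to `p ψ''(N ℓ)`, that is, to `p' - p` with `p' = p (1 + ψ''(N ℓ)) ≥ 0`. Repeating the step with `p'`
in place of `p`, the sums telescope, and they stay bounded in `L¹` since `1 + ψ''` has mean one. The
mixed derivative changes by `± p ψ''(N ℓ)` instead, and the sign is free: averaging over both signs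
does not decrease the `L¹` norm already produced, and a fixed gain is made where `1 + ψ''` vanishes,
because the density is zero there from then on.
-/

open Filter Set Topology
open scoped ContDiff

section DirectionalDerivative

variable {E : Type*} [NormedAddCommGroup E] [NormedSpace ℝ E]

/-- The derivative of `u` in the fixed direction `v`, as a function on `E`. The partial derivatives
`pd1` and `pd2` are, definitionally, the cases `v = (1, 0)` and `v = (0, 1)`. -/
def dirDeriv (v : E) (u : E → ℝ) (x : E) : ℝ := fderiv ℝ u x v

theorem contDiff_dirDeriv {u : E → ℝ} (hu : ContDiff ℝ ∞ u) (v : E) :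
    ContDiff ℝ ∞ (dirDeriv v u) :=
  (hu.fderiv_right (m := ∞) (by simp)).clm_apply contDiff_const

theorem dirDeriv_add {u w : E → ℝ} (hu : Differentiable ℝ u) (hw : Differentiable ℝ w) (v : E) :
    dirDeriv v (u + w) = dirDeriv v u + dirDeriv v w := by
  ext x
  simp [dirDeriv, fderiv_add (hu x) (hw x)]

theorem dirDeriv_zero (v : E) : dirDeriv v 0 = 0 := by
  ext x
  simp [dirDeriv]

theorem dirDeriv_const_smul {u : E → ℝ} (hu : Differentiable ℝ u) (c : ℝ) (v : E) :
    dirDeriv v (c • u) = c • dirDeriv v u := by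
  ext x
  simp [dirDeriv, fderiv_const_smul (hu x)]

/-- Smooth real functions vanishing off `K`: the space of test functions on `K`, in unbundled form
so that it applies to functions given by formulas. -/
structure SmoothSupportedIn (K : Set E) (u : E → ℝ) : Prop where
  contDiff : ContDiff ℝ ∞ u
  eq_zero : ∀ x ∉ K, u x = 0

namespace SmoothSupportedIn

variable {K : Set E} {u w : E → ℝ}

theorem zero : SmoothSupportedIn K 0 := ⟨contDiff_const, fun _ _ => rfl⟩

theorem add (hu : SmoothSupportedIn K u) (hw : SmoothSupportedIn K w) :
    SmoothSupportedIn K (u + w) :=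
  ⟨hu.contDiff.add hw.contDiff, fun x hx => by simp [hu.eq_zero x hx, hw.eq_zero x hx]⟩

theorem mul_contDiff (hu : SmoothSupportedIn K u) (hw : ContDiff ℝ ∞ w) :
    SmoothSupportedIn K (u * w) :=
  ⟨hu.contDiff.mul hw, fun x hx => by simp [hu.eq_zero x hx]⟩

theorem differentiable (hu : SmoothSupportedIn K u) : Differentiable ℝ u :=
  hu.contDiff.differentiable (by simp)

theorem continuous (hu : SmoothSupportedIn K u) : Continuous u := hu.contDiff.continuous

theorem const_smul (hu : SmoothSupportedIn K u) (c : ℝ) : SmoothSupportedIn K (c • u) :=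
  ⟨contDiff_const.smul hu.contDiff, fun x hx => by simp [hu.eq_zero x hx]⟩

theorem fderiv_eq_zero (hu : SmoothSupportedIn K u) (hK : IsClosed K) {x : E} (hx : x ∉ K) :
    fderiv ℝ u x = 0 := by
  have : u =ᶠ[𝓝 x] 0 := eventually_of_mem (hK.isOpen_compl.mem_nhds hx) hu.eq_zero
  rw [this.fderiv_eq, fderiv_zero, Pi.zero_apply]

theorem dirDeriv (hu : SmoothSupportedIn K u) (hK : IsClosed K) (v : E) :
    SmoothSupportedIn K (dirDeriv v u) :=
  ⟨contDiff_dirDeriv hu.contDiff v, fun x hx => by simp [_root_.dirDeriv, hu.fderiv_eq_zero hK hx]⟩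

theorem hasCompactSupport (hu : SmoothSupportedIn K u) (hK : IsCompact K) :
    HasCompactSupport u :=
  .intro hK hu.eq_zero

theorem exists_norm_le (hu : SmoothSupportedIn K u) (hK : IsCompact K) : ∃ C, ∀ x, ‖u x‖ ≤ C :=
  hu.continuous.bounded_above_of_compact_support (hu.hasCompactSupport hK)

theorem exists_norm_fderiv_le (hu : SmoothSupportedIn K u) (hK : IsCompact K) :
    ∃ C, ∀ x, ‖fderiv ℝ u x‖ ≤ C :=
  (hu.contDiff.continuous_fderiv (by simp)).bounded_above_of_compact_support
    ((hu.hasCompactSupport hK).fderiv ℝ)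

theorem integrable [MeasurableSpace E] [OpensMeasurableSpace E] {μ : Measure E}
    [IsFiniteMeasureOnCompacts μ] (hu : SmoothSupportedIn K u) (hK : IsCompact K) :
    Integrable u μ :=
  hu.continuous.integrable_of_hasCompactSupport (hu.hasCompactSupport hK)

theorem integrable_max_abs_mul [MeasurableSpace E] [OpensMeasurableSpace E] {μ : Measure E}
    [IsFiniteMeasureOnCompacts μ] (hu : SmoothSupportedIn K u) (hK : IsCompact K)
    (hw : SmoothSupportedIn K w) (a : ℝ) :
    Integrable (fun x => max |u x| (a * w x)) μ :=
  (hu.integrable hK).abs.sup ((hw.integrable hK).const_mul a)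

end SmoothSupportedIn

end DirectionalDerivative

section Integrals

variable {X : Type*} [MeasurableSpace X] {μ : Measure X} {K : Set X}

theorem norm_integral_le_of_eq_zero_off {F : Type*} [NormedAddCommGroup F] [NormedSpace ℝ F]
    {f : X → F} {C : ℝ} (hf : ∀ x, ‖f x‖ ≤ C) (hfK : ∀ x ∉ K, f x = 0) (hK : μ K < ⊤) :
    ‖∫ x, f x ∂μ‖ ≤ C * μ.real K := by
  rw [← setIntegral_eq_integral_of_forall_compl_eq_zero hfK]
  exact norm_setIntegral_le_of_norm_le_const hK fun x _ => hf x

theorem integral_abs_le_of_eq_zero_off {f : X → ℝ} {C : ℝ} (hf : ∀ x, |f x| ≤ C)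
    (hfK : ∀ x ∉ K, f x = 0) (hK : μ K < ⊤) : ∫ x, |f x| ∂μ ≤ C * μ.real K := by
  refine (le_abs_self _).trans (norm_integral_le_of_eq_zero_off (f := fun x => |f x|) ?_ ?_ hK)
  · simpa using hf
  · simpa using hfK

theorem integral_abs_le_of_integral_abs_sub_sub_le {g p p' : X → ℝ} {ε : ℝ}
    (hg : Integrable g μ) (hp : Integrable p μ) (hp' : Integrable p' μ) (hp₀ : ∀ x, 0 ≤ p x)
    (hp'₀ : ∀ x, 0 ≤ p' x) (hgp : ∫ x, |g x - (p' x - p x)| ∂μ ≤ ε)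
    (hpp' : ∫ x, p' x ∂μ ≤ ∫ x, p x ∂μ + ε) :
    ∫ x, |g x| ∂μ ≤ 2 * ∫ x, p x ∂μ + 2 * ε := by
  have herr : Integrable (fun x => |g x - (p' x - p x)|) μ := (hg.sub (hp'.sub hp)).abs
  have hsum : Integrable (fun x => p' x + p x) μ := hp'.add hp
  calc ∫ x, |g x| ∂μ ≤ ∫ x, (|g x - (p' x - p x)| + (p' x + p x)) ∂μ := by
        refine integral_mono hg.abs (herr.add hsum) fun x => ?_
        calc |g x| = |g x - (p' x - p x) + (p' x - p x)| := by rw [sub_add_cancel]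
          _ ≤ |g x - (p' x - p x)| + (p' x + p x) := (abs_add_le _ _).trans (by
            gcongr
            exact abs_le.2 ⟨by linarith [hp'₀ x], by linarith [hp₀ x]⟩)
    _ = ∫ x, |g x - (p' x - p x)| ∂μ + (∫ x, p' x ∂μ + ∫ x, p x ∂μ) := by
        rw [integral_add herr hsum, integral_add hp' hp]
    _ ≤ 2 * ∫ x, p x ∂μ + 2 * ε := by linarith

theorem tendsto_integral_abs_of_tendstoUniformly {ι : Type*} {L : Filter ι} {f : ι → X → ℝ}
    (hf : TendstoUniformly f 0 L) (hfK : ∀ i, ∀ x ∉ K, f i x = 0) (hK : μ K < ⊤) :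
    Tendsto (fun i => ∫ x, |f i x| ∂μ) L (𝓝 0) := by
  rw [Metric.tendsto_nhds]
  intro ε hε
  have hM : 0 < μ.real K + 1 := by positivity
  filter_upwards [Metric.tendstoUniformly_iff.1 hf (ε / (μ.real K + 1)) (by positivity)] with i hi
  have hbound : ∀ x, |f i x| ≤ ε / (μ.real K + 1) := fun x => by simpa using (hi x).le
  rw [Real.dist_0_eq_abs, abs_of_nonneg (integral_nonneg fun x => abs_nonneg _)]
  calc ∫ x, |f i x| ∂μ ≤ ε / (μ.real K + 1) * μ.real K :=
        integral_abs_le_of_eq_zero_off hbound (hfK i) hK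
    _ < ε / (μ.real K + 1) * (μ.real K + 1) := by gcongr; linarith
    _ = ε := div_mul_cancel₀ _ hM.ne'

end Integrals

section IntegrationByParts

variable {E : Type*} [NormedAddCommGroup E] [NormedSpace ℝ E] [FiniteDimensional ℝ E]
  [MeasurableSpace E] [BorelSpace E] {μ : Measure E} [μ.IsAddHaarMeasure] {K : Set E}
  {u φ : E → ℝ}

theorem integral_mul_dirDeriv (hK : IsCompact K) (hu : SmoothSupportedIn K u)
    (hφ : ContDiff ℝ ∞ φ) (v : E) :
    ∫ x, u x * dirDeriv v φ x ∂μ = -∫ x, dirDeriv v u x * φ x ∂μ :=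
  integral_mul_fderiv_eq_neg_fderiv_mul_of_integrable
    (((hu.dirDeriv hK.isClosed v).mul_contDiff hφ).integrable hK)
    ((hu.mul_contDiff (contDiff_dirDeriv hφ v)).integrable hK)
    ((hu.mul_contDiff hφ).integrable hK)
    (fun x _ => hu.differentiable x) (fun x _ => hφ.differentiable (by simp) x)

theorem integral_mul_dirDeriv_dirDeriv (hK : IsCompact K) (hu : SmoothSupportedIn K u)
    (hφ : ContDiff ℝ ∞ φ) (v w : E) :
    ∫ x, u x * dirDeriv w (dirDeriv v φ) x ∂μ = ∫ x, dirDeriv v (dirDeriv w u) x * φ x ∂μ := by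
  rw [integral_mul_dirDeriv hK hu (contDiff_dirDeriv hφ v) w,
    integral_mul_dirDeriv hK (hu.dirDeriv hK.isClosed w) hφ v, neg_neg]

end IntegrationByParts

section Averaging

variable {E F : Type*} [NormedAddCommGroup E] [NormedAddCommGroup F]
  {G : E → ℝ → F} {K : Set E}

theorem exists_modulus_of_periodic_fibers (hG : Continuous ↿G)
    (hper : ∀ x, Function.Periodic (G x) 1) (hK : IsCompact K) (hGK : ∀ x ∉ K, ∀ t, G x t = 0)
    {ε : ℝ} (hε : 0 < ε) :
    ∃ δ > 0, ∀ x y, dist x y < δ → ∀ t, ‖G x t - G y t‖ ≤ ε := by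
  let Γ : C(E, C(Icc (0 : ℝ) 1, F)) :=
    ContinuousMap.curry ⟨fun z => G z.1 z.2, hG.comp (by fun_prop : Continuous
      fun z : E × Icc (0 : ℝ) 1 => (z.1, (z.2 : ℝ)))⟩
  have hΓ : HasCompactSupport Γ :=
    .intro hK fun x hx => ContinuousMap.ext fun t => hGK x hx t
  obtain ⟨δ, hδ, h⟩ := Metric.uniformContinuous_iff.1
    (hΓ.uniformContinuous_of_continuous Γ.continuous) ε hε
  refine ⟨δ, hδ, fun x y hxy t => ?_⟩
  obtain ⟨s, hs, hst⟩ : ∃ s ∈ Icc (0 : ℝ) 1, ∀ z, G z t = G z s :=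
    ⟨Int.fract t, ⟨Int.fract_nonneg t, (Int.fract_lt_one t).le⟩, fun z => by
      rw [← Int.self_sub_floor]; simpa only [mul_one] using ((hper z).sub_int_mul_eq ⌊t⌋).symm⟩
  rw [hst x, hst y, ← dist_eq_norm]
  exact (ContinuousMap.dist_apply_le_dist (f := Γ x) (g := Γ y) ⟨s, hs⟩).trans (h hxy).le

variable [NormedSpace ℝ F] [MeasurableSpace E] [BorelSpace E] {μ : Measure E}

theorem integrable_intervalIntegral_fiber [IsFiniteMeasureOnCompacts μ] (hG : Continuous ↿G)
    (hK : IsCompact K) (hGK : ∀ x ∉ K, ∀ t, G x t = 0) :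
    Integrable (fun x => ∫ t in (0 : ℝ)..1, G x t) μ :=
  (intervalIntegral.continuous_parametric_intervalIntegral_of_continuous' hG 0 1)
    |>.integrable_of_hasCompactSupport (.intro hK fun x hx => by simp [hGK x hx])

variable [NormedSpace ℝ E]

theorem integral_oscillating_eq_integral_shift [μ.IsAddRightInvariant] (G : E → ℝ → F)
    {ℓ : E →L[ℝ] ℝ} {h : E} (hh : ℓ h = 1) {N : ℝ} (hN : N ≠ 0) (s : ℝ) :
    ∫ x, G x (N * ℓ x) ∂μ = ∫ x, G (x + (s / N) • h) (N * ℓ x + s) ∂μ := by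
  rw [← integral_add_right_eq_self _ ((s / N) • h)]
  congr with x
  rw [map_add, map_smul, hh, smul_eq_mul, mul_one, mul_add, mul_div_cancel₀ _ hN]

variable [FiniteDimensional ℝ E]

theorem integral_intervalIntegral_of_periodic [IsFiniteMeasureOnCompacts μ] (hG : Continuous ↿G)
    (hper : ∀ x, Function.Periodic (G x) 1) (hK : IsCompact K) (hGK : ∀ x ∉ K, ∀ t, G x t = 0)
    {θ : E → ℝ} (hθ : Continuous θ) :
    ∫ x, (∫ t in (0 : ℝ)..1, G x t) ∂μ = ∫ s in (0 : ℝ)..1, ∫ x, G x (θ x + s) ∂μ := by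
  have hcont : Continuous fun z : ℝ × E => G z.2 (θ z.2 + z.1) :=
    hG.comp (by fun_prop : Continuous fun z : ℝ × E => (z.2, θ z.2 + z.1))
  have hint : Integrable (fun z : ℝ × E => G z.2 (θ z.2 + z.1))
      ((volume.restrict (uIoc 0 1)).prod μ) := by
    rw [← μ.restrict_univ, Measure.prod_restrict, uIoc_of_le zero_le_one]
    refine IntegrableOn.of_forall_sdiff_eq_zero (s := Ioc 0 1 ×ˢ K) ?_
      (measurableSet_Ioc.prod .univ) fun z hz => hGK _ (fun hzK => hz.2 ⟨hz.1.1, hzK⟩) _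
    exact (hcont.continuousOn.integrableOn_compact (isCompact_Icc.prod hK)).mono_set
      (prod_mono Ioc_subset_Icc_self Subset.rfl)
  rw [intervalIntegral_integral_swap hint]
  congr with x
  rw [intervalIntegral.integral_comp_add_left (G x), add_zero,
    ← (hper x).intervalIntegral_add_eq 0 (θ x), zero_add]

theorem norm_integral_shift_sub_le [IsFiniteMeasureOnCompacts μ] (hG : Continuous ↿G)
    (hK : IsCompact K) (hGK : ∀ x ∉ K, ∀ t, G x t = 0) {θ : E → ℝ} (hθ : Continuous θ)
    {v : E} (hv : ‖v‖ ≤ 1) {ε : ℝ} (hε : ∀ x t, ‖G (x + v) t - G x t‖ ≤ ε) :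
    ‖∫ x, G (x + v) (θ x) ∂μ - ∫ x, G x (θ x) ∂μ‖ ≤ ε * μ.real (Metric.cthickening 1 K) := by
  have hK' : IsCompact (Metric.cthickening 1 K) := hK.cthickening
  have hzero : ∀ x ∉ Metric.cthickening 1 K, x ∉ K ∧ x + v ∉ K := fun x hx =>
    ⟨fun hxK => hx (Metric.self_subset_cthickening K hxK), fun hxK =>
      hx (Metric.mem_cthickening_of_dist_le x (x + v) 1 K hxK (by simpa using hv))⟩
  have hshift : Integrable (fun x => G (x + v) (θ x)) μ :=
    (hG.comp (by fun_prop : Continuous fun x => (x + v, θ x))).integrable_of_hasCompactSupport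
      (.intro hK' fun x hx => hGK _ (hzero x hx).2 _)
  have hself : Integrable (fun x => G x (θ x)) μ :=
    (hG.comp (by fun_prop : Continuous fun x => (x, θ x))).integrable_of_hasCompactSupport
      (.intro hK fun x hx => hGK x hx _)
  rw [← integral_sub hshift hself]
  refine norm_integral_le_of_eq_zero_off (fun x => hε x (θ x)) (fun x hx => ?_)
    hK'.measure_lt_top
  rw [hGK _ (hzero x hx).1, hGK _ (hzero x hx).2, sub_zero]

/- Translating by `(s / N) • h` moves the phase `N * ℓ x` by `s` but hardly moves the amplitude, so
the integral may be averaged over all phases `s ∈ [0, 1]`. -/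
theorem tendsto_integral_oscillating [CompleteSpace F] [μ.IsAddHaarMeasure]
    (hG : Continuous ↿G) (hper : ∀ x, Function.Periodic (G x) 1) (hK : IsCompact K)
    (hGK : ∀ x ∉ K, ∀ t, G x t = 0) {ℓ : E →L[ℝ] ℝ} {h : E} (hh : ℓ h = 1) :
    Tendsto (fun N : ℝ => ∫ x, G x (N * ℓ x) ∂μ) atTop
      (𝓝 (∫ x, (∫ t in (0 : ℝ)..1, G x t) ∂μ)) := by
  rw [Metric.tendsto_nhds]
  intro ε hε
  set M := μ.real (Metric.cthickening 1 K) + 1 with hM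
  have hM0 : 0 < M := by positivity
  obtain ⟨δ, hδ, hmod⟩ := exists_modulus_of_periodic_fibers hG hper hK hGK (div_pos hε hM0)
  have hsmall : ∀ᶠ N : ℝ in atTop, ‖h‖ / N < min δ 1 :=
    (tendsto_const_nhds.div_atTop tendsto_id).eventually_lt_const (by positivity)
  filter_upwards [hsmall, eventually_gt_atTop 0] with N hN hN0
  have hphase : ∀ s ∈ uIoc (0 : ℝ) 1,
      ‖∫ x, G x (N * ℓ x) ∂μ - ∫ x, G x (N * ℓ x + s) ∂μ‖ ≤ ε / M * (M - 1) := by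
    intro s hs
    rw [uIoc_of_le zero_le_one] at hs
    have hv : ‖(s / N) • h‖ < min δ 1 := by
      rw [norm_smul, norm_of_nonneg (div_nonneg hs.1.le hN0.le), div_mul_eq_mul_div]
      refine lt_of_le_of_lt ?_ hN
      gcongr
      exact mul_le_of_le_one_left (norm_nonneg h) hs.2
    rw [integral_oscillating_eq_integral_shift G hh hN0.ne' s, hM, add_sub_cancel_right]
    exact norm_integral_shift_sub_le hG hK hGK (by fun_prop) (hv.le.trans (min_le_right _ _))
      fun x t => hmod _ _ (by simpa using hv.trans_le (min_le_left _ _)) t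
  have hcont : Continuous fun s => ∫ x, G x (N * ℓ x + s) ∂μ := by
    rw [← continuousOn_univ]
    refine continuousOn_integral_of_compact_support hK ?_ fun s x _ hx => hGK x hx _
    exact (hG.comp (by fun_prop : Continuous
      fun z : ℝ × E => (z.2, N * ℓ z.2 + z.1))).continuousOn
  have hmean := intervalIntegral.norm_integral_le_of_norm_le_const hphase
  rw [intervalIntegral.integral_sub (by simp) (hcont.intervalIntegrable _ _),
    ← integral_intervalIntegral_of_periodic hG hper hK hGK (by fun_prop)] at hmean
  rw [dist_eq_norm]
  calc _ ≤ ε / M * (M - 1) := by simpa using hmean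
    _ < ε / M * M := by gcongr; linarith
    _ = ε := div_mul_cancel₀ _ hM0.ne'

end Averaging

section Waves

variable {E F : Type*} [NormedAddCommGroup E] [NormedSpace ℝ E] [NormedAddCommGroup F]
  [NormedSpace ℝ F]

/-- The plane wave with amplitude `q`, profile `χ`, phase `ℓ` and frequency `N`. -/
def wave (q : E → F) (χ : ℝ → ℝ) (ℓ : E →L[ℝ] ℝ) (N : ℝ) (x : E) : F := χ (N * ℓ x) • q x

theorem tendstoUniformly_inv_pow_smul_wave {q : E → F} {χ : ℝ → ℝ} (hq : ∃ C, ∀ x, ‖q x‖ ≤ C)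
    (hχ : ∃ D, ∀ t, |χ t| ≤ D) (ℓ : E →L[ℝ] ℝ) {k : ℕ} (hk : k ≠ 0) :
    TendstoUniformly (fun (N : ℝ) x => N⁻¹ ^ k • wave q χ ℓ N x) 0 atTop := by
  obtain ⟨C, hC⟩ := hq
  obtain ⟨D, hD⟩ := hχ
  have hlim : Tendsto (fun N : ℝ => |N⁻¹ ^ k| * (D * C)) atTop (𝓝 0) := by
    simpa [hk] using ((tendsto_inv_atTop_zero (𝕜 := ℝ)).pow k).abs.mul_const (D * C)
  rw [Metric.tendstoUniformly_iff]
  intro ε hε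
  filter_upwards [hlim.eventually_lt_const hε] with N hN x
  refine lt_of_le_of_lt ?_ hN
  have hD0 : 0 ≤ D := (abs_nonneg _).trans (hD 0)
  simp only [wave, Pi.zero_apply, dist_zero_left, norm_smul, Real.norm_eq_abs]
  gcongr
  exacts [hD _, hC x]

theorem hasFDerivAt_wave {q : E → ℝ} {χ : ℝ → ℝ} (hq : Differentiable ℝ q)
    (hχ : Differentiable ℝ χ) (ℓ : E →L[ℝ] ℝ) (N : ℝ) (x : E) :
    HasFDerivAt (wave q χ ℓ N)
      (wave (fderiv ℝ q) χ ℓ N x + N • wave (fun y => q y • ℓ) (deriv χ) ℓ N x) x := by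
  have hphase := ((hχ (N * ℓ x)).hasDerivAt.comp_hasFDerivAt x (ℓ.hasFDerivAt.const_mul N))
  refine (hphase.smul (hq x).hasFDerivAt).congr_fderiv ?_
  ext v
  simp [wave]
  ring

theorem dirDeriv_wave {q : E → ℝ} {χ : ℝ → ℝ} (hq : Differentiable ℝ q)
    (hχ : Differentiable ℝ χ) (ℓ : E →L[ℝ] ℝ) (N : ℝ) (v : E) :
    dirDeriv v (wave q χ ℓ N) =
      wave (dirDeriv v q) χ ℓ N + (N * ℓ v) • wave q (deriv χ) ℓ N := by
  ext x
  rw [dirDeriv, (hasFDerivAt_wave hq hχ ℓ N x).fderiv]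
  simp [wave, dirDeriv]
  ring

end Waves

section Corrector

variable {E : Type*} [NormedAddCommGroup E] [NormedSpace ℝ E] {q : E → ℝ} {ψ : ℝ → ℝ}
  {ℓ : E →L[ℝ] ℝ} {K : Set E} {N : ℝ}

theorem exists_abs_le_of_periodic {χ : ℝ → ℝ} (hχ : Continuous χ)
    (hper : Function.Periodic χ 1) : ∃ C, ∀ t, |χ t| ≤ C := by
  obtain ⟨C, hC⟩ := (hper.isBounded_of_continuous one_ne_zero hχ).exists_norm_le
  exact ⟨C, fun t => hC _ (mem_range_self t)⟩

theorem periodic_deriv {χ : ℝ → ℝ} {c : ℝ} (hper : Function.Periodic χ c) :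
    Function.Periodic (deriv χ) c := fun t => by
  rw [← deriv_comp_add_const, hper.funext]

/-- The high-frequency, small-amplitude wave `N⁻² q(x) ψ(N ℓ(x))`, whose second derivatives are
those of the pure oscillation up to `O(N⁻¹)`. -/
def corrector (q : E → ℝ) (ψ : ℝ → ℝ) (ℓ : E →L[ℝ] ℝ) (N : ℝ) : E → ℝ := N⁻¹ ^ 2 • wave q ψ ℓ N

theorem SmoothSupportedIn.wave (hq : SmoothSupportedIn K q) (hψ : ContDiff ℝ ∞ ψ) :
    SmoothSupportedIn K (wave q ψ ℓ N) :=
  ⟨(hψ.comp (contDiff_const.mul ℓ.contDiff)).smul hq.contDiff,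
    fun x hx => by simp [_root_.wave, hq.eq_zero x hx]⟩

theorem fderiv_corrector (hq : Differentiable ℝ q) (hψ : Differentiable ℝ ψ) (hN : N ≠ 0)
    (x : E) :
    fderiv ℝ (corrector q ψ ℓ N) x =
      N⁻¹ ^ 2 • wave (fderiv ℝ q) ψ ℓ N x + N⁻¹ ^ 1 • wave (fun y => q y • ℓ) (deriv ψ) ℓ N x := by
  rw [corrector, ((hasFDerivAt_wave hq hψ ℓ N x).const_smul (N⁻¹ ^ 2)).fderiv, smul_add, smul_smul]
  congr 2
  field_simp

theorem dirDeriv_dirDeriv_corrector_sub (hq : SmoothSupportedIn K q) (hK : IsClosed K)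
    (hψ : ContDiff ℝ ∞ ψ) (hN : N ≠ 0) (v w x : E) :
    dirDeriv w (dirDeriv v (corrector q ψ ℓ N)) x
        - ℓ v * ℓ w * wave q (deriv (deriv ψ)) ℓ N x =
      N⁻¹ ^ 2 • wave (dirDeriv w (dirDeriv v q)) ψ ℓ N x +
        N⁻¹ ^ 1 • wave (ℓ w • dirDeriv v q + ℓ v • dirDeriv w q) (deriv ψ) ℓ N x := by
  have hψ' : ContDiff ℝ ∞ (deriv ψ) := hψ.iterate_deriv 1
  have hψd : Differentiable ℝ ψ := hψ.differentiable (by simp)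
  have hψd' : Differentiable ℝ (deriv ψ) := hψ'.differentiable (by simp)
  have hqv := hq.dirDeriv hK v
  rw [corrector, dirDeriv_const_smul (hq.wave hψ).differentiable,
    dirDeriv_wave hq.differentiable hψd, smul_add, smul_smul,
    dirDeriv_add ((hqv.wave hψ).const_smul _).differentiable
      ((hq.wave hψ').const_smul _).differentiable,
    dirDeriv_const_smul (hqv.wave hψ).differentiable,
    dirDeriv_const_smul (hq.wave hψ').differentiable,
    dirDeriv_wave hqv.differentiable hψd, dirDeriv_wave hq.differentiable hψd']
  simp [wave]
  field_simp
  ring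

variable (ℓ) in
theorem tendstoUniformly_corrector (hK : IsCompact K) (hq : SmoothSupportedIn K q)
    (hψ : Continuous ψ) (hper : Function.Periodic ψ 1) :
    TendstoUniformly (corrector q ψ ℓ) 0 atTop :=
  tendstoUniformly_inv_pow_smul_wave (hq.exists_norm_le hK) (exists_abs_le_of_periodic hψ hper) ℓ
    two_ne_zero

variable (ℓ) in
theorem tendstoUniformly_fderiv_corrector (hK : IsCompact K) (hq : SmoothSupportedIn K q)
    (hψ : ContDiff ℝ 1 ψ) (hper : Function.Periodic ψ 1) :
    TendstoUniformly (fun N => fderiv ℝ (corrector q ψ ℓ N)) 0 atTop := by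
  obtain ⟨C, hC⟩ := hq.exists_norm_le hK
  have hqℓ : ∃ D, ∀ x, ‖q x • ℓ‖ ≤ D :=
    ⟨C * ‖ℓ‖, fun x => by rw [norm_smul]; gcongr; exact hC x⟩
  have hlim := (tendstoUniformly_inv_pow_smul_wave (hq.exists_norm_fderiv_le hK)
    (exists_abs_le_of_periodic hψ.continuous hper) ℓ two_ne_zero).add
    (tendstoUniformly_inv_pow_smul_wave hqℓ
      (exists_abs_le_of_periodic hψ.continuous_deriv_one (periodic_deriv hper)) ℓ one_ne_zero)
  rw [add_zero] at hlim
  refine (tendstoUniformly_congr ?_).1 hlim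
  filter_upwards [eventually_ne_atTop 0] with N hN
  exact funext fun x =>
    (fderiv_corrector hq.differentiable (hψ.differentiable one_ne_zero) hN x).symm

variable (ℓ) in
theorem tendstoUniformly_dirDeriv_dirDeriv_corrector_sub (hK : IsCompact K)
    (hq : SmoothSupportedIn K q) (hψ : ContDiff ℝ ∞ ψ) (hper : Function.Periodic ψ 1) (v w : E) :
    TendstoUniformly (fun N x => dirDeriv w (dirDeriv v (corrector q ψ ℓ N)) x
      - ℓ v * ℓ w * wave q (deriv (deriv ψ)) ℓ N x) 0 atTop := by
  have hψ' : ContDiff ℝ ∞ (deriv ψ) := hψ.iterate_deriv 1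
  have hqv := hq.dirDeriv hK.isClosed v
  have hqw := hq.dirDeriv hK.isClosed w
  have hlim := (tendstoUniformly_inv_pow_smul_wave ((hqv.dirDeriv hK.isClosed w).exists_norm_le hK)
    (exists_abs_le_of_periodic hψ.continuous hper) ℓ two_ne_zero).add
    (tendstoUniformly_inv_pow_smul_wave
      (((hqv.const_smul (ℓ w)).add (hqw.const_smul (ℓ v))).exists_norm_le hK)
      (exists_abs_le_of_periodic hψ'.continuous (periodic_deriv hper)) ℓ one_ne_zero)
  rw [add_zero] at hlim
  refine (tendstoUniformly_congr ?_).1 hlim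
  filter_upwards [eventually_ne_atTop 0] with N hN
  exact funext fun x => (dirDeriv_dirDeriv_corrector_sub hq hK.isClosed hψ hN v w x).symm

end Corrector

section Profile

variable {ψ : ℝ → ℝ}

/-- The oscillating density `1 + ψ''` carried by a profile `ψ`: adding to a function `u` the
corrector with amplitude `p` and profile `ψ` turns the density `p` into `p (1 + ψ'')`. -/
def profileDensity (ψ : ℝ → ℝ) (t : ℝ) : ℝ := 1 + deriv (deriv ψ) t

/-- The fraction of a period on which the density of a profile vanishes. -/
def voidFraction (ψ : ℝ → ℝ) : ℝ := volume.real {t ∈ Ioc (0 : ℝ) 1 | profileDensity ψ t = 0}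

/-- Profiles of the oscillations used in the lamination: their density is nonnegative and vanishes
on a set of positive measure. -/
structure IsLaminationProfile (ψ : ℝ → ℝ) : Prop where
  contDiff : ContDiff ℝ ∞ ψ
  periodic : Function.Periodic ψ 1
  density_nonneg : ∀ t, 0 ≤ profileDensity ψ t
  voidFraction_pos : 0 < voidFraction ψ

namespace IsLaminationProfile

theorem contDiff_deriv_deriv (hψ : IsLaminationProfile ψ) : ContDiff ℝ ∞ (deriv (deriv ψ)) :=
  hψ.contDiff.iterate_deriv 2

theorem periodic_deriv_deriv (hψ : IsLaminationProfile ψ) :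
    Function.Periodic (deriv (deriv ψ)) 1 :=
  periodic_deriv (periodic_deriv hψ.periodic)

theorem contDiff_density (hψ : IsLaminationProfile ψ) : ContDiff ℝ ∞ (profileDensity ψ) :=
  contDiff_const.add hψ.contDiff_deriv_deriv

theorem periodic_density (hψ : IsLaminationProfile ψ) : Function.Periodic (profileDensity ψ) 1 :=
  fun t => congrArg (1 + ·) (hψ.periodic_deriv_deriv t)

theorem integral_density (hψ : IsLaminationProfile ψ) :
    ∫ t in (0 : ℝ)..1, profileDensity ψ t = 1 := by
  have hψ' : ContDiff ℝ ∞ (deriv ψ) := hψ.contDiff.iterate_deriv 1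
  have hψ'' := hψ.contDiff_deriv_deriv.continuous
  simp only [profileDensity]
  rw [intervalIntegral.integral_add (by simp) (hψ''.intervalIntegrable _ _),
    intervalIntegral.integral_deriv_eq_sub (fun t _ => hψ'.differentiable (by simp) t)
      (hψ''.intervalIntegrable _ _), ← zero_add (1 : ℝ), periodic_deriv hψ.periodic 0]
  simp

end IsLaminationProfile

theorem exists_periodic_primitive {χ : ℝ → ℝ} (hχ : ContDiff ℝ ∞ χ) (hper : Function.Periodic χ 1)
    (hmean : ∫ t in (0 : ℝ)..1, χ t = 0) :
    ∃ Φ : ℝ → ℝ, ContDiff ℝ ∞ Φ ∧ Function.Periodic Φ 1 ∧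
      ∫ t in (0 : ℝ)..1, Φ t = 0 ∧ deriv Φ = χ := by
  set I : ℝ → ℝ := fun t => ∫ s in (0 : ℝ)..t, χ s
  set Φ : ℝ → ℝ := fun t => I t - ∫ s in (0 : ℝ)..1, I s
  have hI : ∀ t, HasDerivAt I (χ t) t := fun t =>
    intervalIntegral.integral_hasDerivAt_right (hχ.continuous.intervalIntegrable _ _)
      (hχ.continuous.stronglyMeasurableAtFilter _ _) hχ.continuous.continuousAt
  have hIc : Continuous I := continuous_iff_continuousAt.2 fun t => (hI t).continuousAt
  have hIper : Function.Periodic I 1 := fun t => by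
    have hshift := hper.intervalIntegral_add_eq t 0
    rw [zero_add, hmean] at hshift
    simp only [I]
    rw [← intervalIntegral.integral_add_adjacent_intervals
      (hχ.continuous.intervalIntegrable 0 t) (hχ.continuous.intervalIntegrable t (t + 1)),
      hshift, add_zero]
  have hΦ : ∀ t, HasDerivAt Φ (χ t) t := fun t => (hI t).sub_const _
  have hderiv : deriv Φ = χ := funext fun t => (hΦ t).deriv
  refine ⟨Φ, contDiff_infty_iff_deriv.2 ⟨fun t => (hΦ t).differentiableAt, hderiv ▸ hχ⟩,
    fun t => by simp only [Φ, hIper t], ?_, hderiv⟩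
  rw [intervalIntegral.integral_sub (hIc.intervalIntegrable _ _) (by simp)]
  simp

theorem exists_profileDensity_eq {η : ℝ → ℝ} (hη : ContDiff ℝ ∞ η) (hper : Function.Periodic η 1)
    (hmass : ∫ t in (0 : ℝ)..1, η t = 1) :
    ∃ ψ, ContDiff ℝ ∞ ψ ∧ Function.Periodic ψ 1 ∧ profileDensity ψ = η := by
  obtain ⟨ψ', hψ', hper', hmean', hderiv'⟩ := exists_periodic_primitive
    (χ := fun t => η t - 1) (hη.sub contDiff_const) (fun t => by simp only [hper t]) (by
      rw [intervalIntegral.integral_sub (hη.continuous.intervalIntegrable _ _) (by simp), hmass]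
      simp)
  obtain ⟨ψ, hψ, hper, -, hderiv⟩ := exists_periodic_primitive hψ' hper' hmean'
  exact ⟨ψ, hψ, hper, funext fun t => by simp [profileDensity, hderiv, hderiv']⟩

theorem exists_isLaminationProfile : ∃ ψ, IsLaminationProfile ψ := by
  set ρ : ℝ → ℝ := fun t => smoothTransition (cos (2 * π * t)) with hρ_def
  have hρ : ContDiff ℝ ∞ ρ :=
    smoothTransition.contDiff.comp (contDiff_cos.comp (contDiff_const.mul contDiff_id))
  have hmass : 0 < ∫ t in (0 : ℝ)..1, ρ t :=
    intervalIntegral.integral_pos one_pos hρ.continuous.continuousOn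
      (fun t _ => smoothTransition.nonneg _) ⟨0, by simp, by simp [ρ]⟩
  set m := ∫ t in (0 : ℝ)..1, ρ t
  obtain ⟨ψ, hψ, hper, hdensity⟩ := exists_profileDensity_eq (η := fun t => m⁻¹ * ρ t)
    (contDiff_const.mul hρ) (fun t => by simp only [ρ, mul_add, mul_one, cos_add_two_pi])
    (by rw [intervalIntegral.integral_const_mul, inv_mul_cancel₀ hmass.ne'])
  refine ⟨ψ, hψ, hper, fun t => ?_, ?_⟩
  · rw [hdensity]
    exact mul_nonneg (inv_nonneg.2 hmass.le) (smoothTransition.nonneg _)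
  have hvoid : Ioo (1 / 4 : ℝ) (3 / 4) ⊆ {t ∈ Ioc (0 : ℝ) 1 | profileDensity ψ t = 0} := by
    rintro t ⟨ht₁, ht₂⟩
    refine ⟨⟨by linarith, by linarith⟩, ?_⟩
    have hcos : cos (2 * π * t) ≤ 0 :=
      cos_nonpos_of_pi_div_two_le_of_le (by nlinarith [pi_pos]) (by nlinarith [pi_pos])
    simp only [hdensity, hρ_def, smoothTransition.zero_of_nonpos hcos, mul_zero]
  calc (0 : ℝ) < volume.real (Ioo (1 / 4 : ℝ) (3 / 4)) := by norm_num [Real.volume_real_Ioo_of_le]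
    _ ≤ voidFraction ψ := measureReal_mono hvoid
      (measure_ne_top_of_subset (fun t ht => ht.1) measure_Ioc_lt_top.ne)

theorem two_mul_abs_le_abs_add_add_abs_sub (b d : ℝ) : 2 * |b| ≤ |b + d| + |b - d| := by
  calc 2 * |b| = |b + d + (b - d)| := by rw [← abs_two, ← abs_mul]; congr 1; ring
    _ ≤ |b + d| + |b - d| := abs_add_le _ _

theorem two_mul_abs_le_abs_add_add_abs_sub' (b d : ℝ) : 2 * |d| ≤ |b + d| + |b - d| := by
  rw [add_comm b, abs_sub_comm]
  exact two_mul_abs_le_abs_add_add_abs_sub d b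

theorem intervalIntegrable_zeroSet_indicator {η : ℝ → ℝ} (hη : Continuous η) :
    IntervalIntegrable ({t | η t = 0}.indicator (1 : ℝ → ℝ)) volume 0 1 := by
  rw [intervalIntegrable_iff_integrableOn_Ioc_of_le zero_le_one]
  exact (integrable_const (1 : ℝ)).indicator (hη.measurable (measurableSet_singleton 0))

theorem integral_zeroSet_indicator {η : ℝ → ℝ} (hη : Continuous η) :
    ∫ t in (0 : ℝ)..1, {t | η t = 0}.indicator (1 : ℝ → ℝ) t =
      volume.real {t ∈ Ioc (0 : ℝ) 1 | η t = 0} := by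
  have hZ : MeasurableSet {t | η t = 0} := hη.measurable (measurableSet_singleton 0)
  rw [intervalIntegral.integral_of_le zero_le_one, integral_indicator_one hZ,
    measureReal_restrict_apply hZ, inter_comm]
  rfl

/-- The integrand whose average over `x` is the limit of `∫ max |b + ∂_w ∂_v u| (a p')` when `u` is
the corrector of the amplitude `p` with density `η` and `∂_w ∂_v` picks up the sign `s`. -/
def splitMax (η : ℝ → ℝ) (a s b p t : ℝ) : ℝ := max |b + s * (p * (η t - 1))| (a * (p * η t))

theorem continuous_splitMax {X : Type*} [TopologicalSpace X] {η : ℝ → ℝ} {b p : X → ℝ}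
    (hη : Continuous η) (hb : Continuous b) (hp : Continuous p) (a s : ℝ) :
    Continuous ↿fun x t => splitMax η a s (b x) (p x) t := by
  unfold splitMax
  fun_prop

theorem two_mul_mul_add_indicator_le_splitMax_add_splitMax (η : ℝ → ℝ) {p : ℝ} (hp : 0 ≤ p)
    (a b t : ℝ) :
    2 * (a * p) * η t + 2 * p * {t | η t = 0}.indicator 1 t ≤
      splitMax η a 1 b p t + splitMax η a (-1) b p t := by
  simp only [splitMax, one_mul, neg_mul, ← sub_eq_add_neg]
  by_cases ht : η t = 0
  · have hdiff : |p * (η t - 1)| = p := by simp [ht, abs_of_nonneg hp]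
    calc 2 * (a * p) * η t + 2 * p * {t | η t = 0}.indicator 1 t = 2 * |p * (η t - 1)| := by
          rw [indicator_of_mem (show t ∈ {t | η t = 0} from ht), hdiff, ht]
          simp
      _ ≤ |b + p * (η t - 1)| + |b - p * (η t - 1)| := two_mul_abs_le_abs_add_add_abs_sub' _ _
      _ ≤ _ := add_le_add (le_max_left _ _) (le_max_left _ _)
  · calc 2 * (a * p) * η t + 2 * p * {t | η t = 0}.indicator 1 t
        = a * (p * η t) + a * (p * η t) := by
          rw [indicator_of_notMem (show t ∉ {t | η t = 0} from ht)]
          ring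
      _ ≤ _ := add_le_add (le_max_right _ _) (le_max_right _ _)

/- The average over `s = ±1` of `|b + s p (η - 1)|` is at least `|b|`, and at least `p` where
`η = 0`. -/
theorem two_mul_max_le_integral_splitMax {η : ℝ → ℝ} (hη : Continuous η)
    (hmass : ∫ t in (0 : ℝ)..1, η t = 1) {p : ℝ} (hp : 0 ≤ p) (a b : ℝ) :
    2 * max |b| ((a + volume.real {t ∈ Ioc (0 : ℝ) 1 | η t = 0}) * p) ≤
      (∫ t in (0 : ℝ)..1, splitMax η a 1 b p t) + ∫ t in (0 : ℝ)..1, splitMax η a (-1) b p t := by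
  have hsplit : ∀ s, IntervalIntegrable (splitMax η a s b p) volume 0 1 := fun s =>
    Continuous.intervalIntegrable (by unfold splitMax; fun_prop) _ _
  rw [← intervalIntegral.integral_add (hsplit 1) (hsplit (-1)), mul_max_of_nonneg _ _ zero_le_two]
  refine max_le ?_ ?_
  · calc 2 * |b| = ∫ t in (0 : ℝ)..1, 2 * |b| := by simp
      _ ≤ _ := intervalIntegral.integral_mono_on zero_le_one (by simp)
        ((hsplit 1).add (hsplit (-1))) fun t _ => by
          simp only [splitMax, one_mul, neg_mul, ← sub_eq_add_neg]
          exact (two_mul_abs_le_abs_add_add_abs_sub b (p * (η t - 1))).trans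
            (add_le_add (le_max_left _ _) (le_max_left _ _))
  · have hdensity := (hη.intervalIntegrable (μ := volume) 0 1).const_mul (2 * (a * p))
    have hind := (intervalIntegrable_zeroSet_indicator hη).const_mul (2 * p)
    calc 2 * ((a + volume.real {t ∈ Ioc (0 : ℝ) 1 | η t = 0}) * p)
        = ∫ t in (0 : ℝ)..1, (2 * (a * p) * η t + 2 * p * {t | η t = 0}.indicator 1 t) := by
          rw [intervalIntegral.integral_add hdensity hind, intervalIntegral.integral_const_mul,
            intervalIntegral.integral_const_mul, hmass, integral_zeroSet_indicator hη]
          ring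
      _ ≤ _ := intervalIntegral.integral_mono_on zero_le_one (hdensity.add hind)
        ((hsplit 1).add (hsplit (-1))) fun t _ =>
          two_mul_mul_add_indicator_le_splitMax_add_splitMax η hp a b t

end Profile

section Lamination

theorem exists_functional_of_linearIndependent_pair {E : Type*} [NormedAddCommGroup E]
    [NormedSpace ℝ E] [FiniteDimensional ℝ E] {v w : E} (hvw : LinearIndependent ℝ ![v, w])
    (s t : ℝ) : ∃ ℓ : E →L[ℝ] ℝ, ℓ v = s ∧ ℓ w = t := by
  obtain ⟨ℓ, hℓ⟩ := LinearMap.exists_extend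
    ((Module.Basis.span hvw).constr ℝ ![s, t] : Submodule.span ℝ (range ![v, w]) →ₗ[ℝ] ℝ)
  have hval : ∀ i, ℓ (![v, w] i) = ![s, t] i := fun i => by
    rw [← (Module.Basis.span hvw).constr_basis ℝ ![s, t] i, ← hℓ]
    simp [Module.Basis.span_apply]
  exact ⟨LinearMap.toContinuousLinearMap ℓ, hval 0, hval 1⟩

variable {E : Type*} [NormedAddCommGroup E] [NormedSpace ℝ E] [MeasurableSpace E]

/-- `u` carries the density `p` to the density `p'`, up to an error `ε`: it is small in `C¹`, and
both `∂_v² u` and `∂_w² u` are close to `p' - p` in `L¹(μ)`. -/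
structure IsLamination (μ : Measure E) (K : Set E) (v w : E) (ε : ℝ) (p p' u : E → ℝ) : Prop where
  smoothSupportedIn : SmoothSupportedIn K u
  density_smoothSupportedIn : SmoothSupportedIn K p'
  density_nonneg : ∀ x, 0 ≤ p' x
  abs_le : ∀ x, |u x| ≤ ε
  norm_fderiv_le : ∀ x, ‖fderiv ℝ u x‖ ≤ ε
  integral_fst_le : ∫ x, |dirDeriv v (dirDeriv v u) x - (p' x - p x)| ∂μ ≤ ε
  integral_snd_le : ∫ x, |dirDeriv w (dirDeriv w u) x - (p' x - p x)| ∂μ ≤ ε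
  integral_density_le : ∫ x, p' x ∂μ ≤ ∫ x, p x ∂μ + ε

variable {μ : Measure E} {K : Set E} {v w : E}
  {ψ : ℝ → ℝ} {p p' p'' b u u' : E → ℝ} {a ε ε' : ℝ} {ℓ : E →L[ℝ] ℝ}

namespace IsLamination

theorem refl (hp : SmoothSupportedIn K p) (hp₀ : ∀ x, 0 ≤ p x) (hε : 0 ≤ ε) :
    IsLamination μ K v w ε p p 0 where
  smoothSupportedIn := .zero
  density_smoothSupportedIn := hp
  density_nonneg := hp₀
  abs_le := by simpa using hε
  norm_fderiv_le := by simpa using hε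
  integral_fst_le := by simpa [dirDeriv_zero] using hε
  integral_snd_le := by simpa [dirDeriv_zero] using hε
  integral_density_le := by simpa using hε

variable [BorelSpace E]

theorem integral_abs_add_sub_le [IsFiniteMeasureOnCompacts μ] (hK : IsCompact K)
    (hp : SmoothSupportedIn K p) (hp' : SmoothSupportedIn K p') (hp'' : SmoothSupportedIn K p'')
    (hu : SmoothSupportedIn K u) (hu' : SmoothSupportedIn K u') (v : E) :
    ∫ x, |dirDeriv v (dirDeriv v (u + u')) x - (p'' x - p x)| ∂μ ≤
      ∫ x, |dirDeriv v (dirDeriv v u) x - (p' x - p x)| ∂μ +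
        ∫ x, |dirDeriv v (dirDeriv v u') x - (p'' x - p' x)| ∂μ := by
  have hvu := hu.dirDeriv hK.isClosed v
  have hvu' := hu'.dirDeriv hK.isClosed v
  have hint : ∀ {f g h : E → ℝ}, SmoothSupportedIn K f → SmoothSupportedIn K g →
      SmoothSupportedIn K h → Integrable (fun x => |f x - (g x - h x)|) μ := fun hf hg hh =>
    ((hf.integrable hK).sub ((hg.integrable hK).sub (hh.integrable hK))).abs
  have hvvu := hvu.dirDeriv hK.isClosed v
  have hvvu' := hvu'.dirDeriv hK.isClosed v
  rw [← integral_add (hint hvvu hp' hp) (hint hvvu' hp'' hp'),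
    dirDeriv_add hu.differentiable hu'.differentiable,
    dirDeriv_add hvu.differentiable hvu'.differentiable]
  refine integral_mono (hint (hvvu.add hvvu') hp'' hp)
    ((hint hvvu hp' hp).add (hint hvvu' hp'' hp')) fun x => ?_
  refine le_of_eq_of_le ?_ (abs_add_le _ _)
  simp only [Pi.add_apply]
  congr 1
  ring

theorem trans [IsFiniteMeasureOnCompacts μ] (hK : IsCompact K) (hp : SmoothSupportedIn K p)
    (h : IsLamination μ K v w ε p p' u) (h' : IsLamination μ K v w ε' p' p'' u') :
    IsLamination μ K v w (ε + ε') p p'' (u + u') where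
  smoothSupportedIn := h.smoothSupportedIn.add h'.smoothSupportedIn
  density_smoothSupportedIn := h'.density_smoothSupportedIn
  density_nonneg := h'.density_nonneg
  abs_le x := (abs_add_le _ _).trans (add_le_add (h.abs_le x) (h'.abs_le x))
  norm_fderiv_le x := by
    rw [fderiv_add (h.smoothSupportedIn.differentiable x) (h'.smoothSupportedIn.differentiable x)]
    exact (norm_add_le _ _).trans (add_le_add (h.norm_fderiv_le x) (h'.norm_fderiv_le x))
  integral_fst_le := (integral_abs_add_sub_le hK hp h.density_smoothSupportedIn
    h'.density_smoothSupportedIn h.smoothSupportedIn h'.smoothSupportedIn v).trans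
      (add_le_add h.integral_fst_le h'.integral_fst_le)
  integral_snd_le := (integral_abs_add_sub_le hK hp h.density_smoothSupportedIn
    h'.density_smoothSupportedIn h.smoothSupportedIn h'.smoothSupportedIn w).trans
      (add_le_add h.integral_snd_le h'.integral_snd_le)
  integral_density_le := by linarith [h.integral_density_le, h'.integral_density_le]

end IsLamination

theorem tendsto_integral_abs_corrector_sub [IsFiniteMeasureOnCompacts μ]
    (hψ : IsLaminationProfile ψ) (hK : IsCompact K) (hp : SmoothSupportedIn K p) (ℓ : E →L[ℝ] ℝ)
    (v w : E) :
    Tendsto (fun N => ∫ x, |dirDeriv w (dirDeriv v (corrector p ψ ℓ N)) x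
      - ℓ v * ℓ w * (wave p (profileDensity ψ) ℓ N x - p x)| ∂μ) atTop (𝓝 0) := by
  have hosc : ∀ N x, wave p (profileDensity ψ) ℓ N x - p x = wave p (deriv (deriv ψ)) ℓ N x :=
    fun N x => by simp [wave, profileDensity]; ring
  simp only [hosc]
  refine tendsto_integral_abs_of_tendstoUniformly
    (tendstoUniformly_dirDeriv_dirDeriv_corrector_sub ℓ hK hp hψ.contDiff hψ.periodic v w)
    (fun N x hx => ?_) hK.measure_lt_top
  have hcorr := (((hp.wave hψ.contDiff (ℓ := ℓ) (N := N)).const_smul (N⁻¹ ^ 2)).dirDeriv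
    hK.isClosed v).dirDeriv hK.isClosed w
  rw [corrector, hcorr.eq_zero x hx, (hp.wave hψ.contDiff_deriv_deriv).eq_zero x hx]
  simp

variable [BorelSpace E]

theorem exists_sign_integral_max_le [IsFiniteMeasureOnCompacts μ] (hψ : IsLaminationProfile ψ)
    (hK : IsCompact K) (hp : SmoothSupportedIn K p) (hp₀ : ∀ x, 0 ≤ p x)
    (hb : SmoothSupportedIn K b) (a : ℝ) :
    ∃ s : ℝ, s * s = 1 ∧ ∫ x, max |b x| ((a + voidFraction ψ) * p x) ∂μ ≤
      ∫ x, (∫ t in (0 : ℝ)..1, splitMax (profileDensity ψ) a s (b x) (p x) t) ∂μ := by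
  have hη := hψ.contDiff_density.continuous
  have hint : ∀ s, Integrable (fun x => ∫ t in (0 : ℝ)..1,
      splitMax (profileDensity ψ) a s (b x) (p x) t) μ := fun s =>
    integrable_intervalIntegral_fiber (continuous_splitMax hη hb.continuous hp.continuous a s) hK
      fun x hx t => by simp [splitMax, hp.eq_zero x hx, hb.eq_zero x hx]
  have hmean := integral_mono ((hb.integrable_max_abs_mul (μ := μ) hK hp
    (a + voidFraction ψ)).const_mul 2) ((hint 1).add (hint (-1))) fun x =>
      two_mul_max_le_integral_splitMax hη hψ.integral_density (hp₀ x) a (b x)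
  simp only [Pi.add_apply] at hmean
  rw [integral_const_mul, integral_add (hint 1) (hint (-1))] at hmean
  by_cases h : ∫ x, max |b x| ((a + voidFraction ψ) * p x) ∂μ ≤
      ∫ x, (∫ t in (0 : ℝ)..1, splitMax (profileDensity ψ) a 1 (b x) (p x) t) ∂μ
  · exact ⟨1, by norm_num, h⟩
  · exact ⟨-1, by norm_num, by linarith⟩

theorem integral_splitMax_le [IsFiniteMeasureOnCompacts μ] {η : ℝ → ℝ} (hη : ContDiff ℝ ∞ η)
    (hK : IsCompact K) (hp : SmoothSupportedIn K p) (hb : SmoothSupportedIn K b)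
    (hu : SmoothSupportedIn K u) (a s N : ℝ) (ℓ : E →L[ℝ] ℝ) :
    ∫ x, splitMax η a s (b x) (p x) (N * ℓ x) ∂μ ≤
      ∫ x, max |b x + u x| (a * wave p η ℓ N x) ∂μ +
        ∫ x, |u x - s * (wave p η ℓ N x - p x)| ∂μ := by
  have hpη := hp.wave hη (ℓ := ℓ) (N := N)
  have hmax : Integrable (fun x => max |b x + u x| (a * wave p η ℓ N x)) μ :=
    (hb.add hu).integrable_max_abs_mul hK hpη a
  have herr : Integrable (fun x => |u x - s * (wave p η ℓ N x - p x)|) μ :=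
    ((hu.integrable hK).sub
      (((hpη.integrable hK).sub (hp.integrable hK)).const_mul s)).abs
  rw [← integral_add hmax herr]
  refine integral_mono_of_nonneg (.of_forall fun x => le_max_of_le_left (abs_nonneg _))
    (hmax.add herr) (.of_forall fun x => ?_)
  have hsplit : splitMax η a s (b x) (p x) (N * ℓ x) =
      max |b x + s * (wave p η ℓ N x - p x)| (a * wave p η ℓ N x) := by
    simp only [splitMax, wave, smul_eq_mul]
    ring_nf
  have hclose := (abs_le.1 ((abs_max_sub_max_le_abs |b x + s * (wave p η ℓ N x - p x)| |b x + u x|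
    (a * wave p η ℓ N x)).trans (abs_abs_sub_abs_le_abs_sub _ _))).2
  rw [add_sub_add_left_eq_sub, abs_sub_comm] at hclose
  simp only [hsplit]
  linarith

variable [FiniteDimensional ℝ E]

theorem tendsto_integral_wave_profileDensity [μ.IsAddHaarMeasure] (hψ : IsLaminationProfile ψ)
    (hK : IsCompact K) (hp : SmoothSupportedIn K p) (hℓv : ℓ v = 1) :
    Tendsto (fun N => ∫ x, wave p (profileDensity ψ) ℓ N x ∂μ) atTop (𝓝 (∫ x, p x ∂μ)) := by
  have hη := hψ.contDiff_density.continuous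
  have hpc := hp.continuous
  have hlim := tendsto_integral_oscillating (μ := μ) (G := fun x t => profileDensity ψ t • p x)
    (by fun_prop) (fun x t => by simp only [hψ.periodic_density t]) hK
    (fun x hx t => by simp [hp.eq_zero x hx]) hℓv
  simpa only [wave, intervalIntegral.integral_smul_const, hψ.integral_density, one_smul] using hlim

theorem eventually_isLamination_corrector [μ.IsAddHaarMeasure] (hψ : IsLaminationProfile ψ)
    (hK : IsCompact K) (hp : SmoothSupportedIn K p) (hp₀ : ∀ x, 0 ≤ p x) (hℓv : ℓ v = 1)
    (hℓw : ℓ w * ℓ w = 1) (hε : 0 < ε) :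
    ∀ᶠ N in atTop, IsLamination μ K v w ε p (wave p (profileDensity ψ) ℓ N)
      (corrector p ψ ℓ N) := by
  filter_upwards [
    Metric.tendstoUniformly_iff.1
      (tendstoUniformly_corrector ℓ hK hp hψ.contDiff.continuous hψ.periodic) ε hε,
    Metric.tendstoUniformly_iff.1 (tendstoUniformly_fderiv_corrector ℓ hK hp
      (hψ.contDiff.of_le (by simp)) hψ.periodic) ε hε,
    (tendsto_integral_abs_corrector_sub (μ := μ) hψ hK hp ℓ v v).eventually_le_const hε,
    (tendsto_integral_abs_corrector_sub (μ := μ) hψ hK hp ℓ w w).eventually_le_const hε,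
    (tendsto_integral_wave_profileDensity (μ := μ) hψ hK hp hℓv).eventually_le_const
      (lt_add_of_pos_right _ hε)] with N habs hfderiv hfst hsnd hdensity
  exact {
    smoothSupportedIn := (hp.wave hψ.contDiff).const_smul _
    density_smoothSupportedIn := hp.wave hψ.contDiff_density
    density_nonneg := fun x => mul_nonneg (hψ.density_nonneg _) (hp₀ x)
    abs_le := fun x => by simpa using (habs x).le
    norm_fderiv_le := fun x => by simpa using (hfderiv x).le
    integral_fst_le := by simpa only [hℓv, one_mul] using hfst
    integral_snd_le := by simpa only [hℓw, one_mul] using hsnd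
    integral_density_le := hdensity }

theorem tendsto_integral_splitMax [μ.IsAddHaarMeasure] (hψ : IsLaminationProfile ψ)
    (hK : IsCompact K) (hp : SmoothSupportedIn K p) (hb : SmoothSupportedIn K b) (a s : ℝ)
    (hℓv : ℓ v = 1) :
    Tendsto (fun N => ∫ x, splitMax (profileDensity ψ) a s (b x) (p x) (N * ℓ x) ∂μ) atTop
      (𝓝 (∫ x, (∫ t in (0 : ℝ)..1, splitMax (profileDensity ψ) a s (b x) (p x) t) ∂μ)) :=
  tendsto_integral_oscillating
    (continuous_splitMax hψ.contDiff_density.continuous hb.continuous hp.continuous a s)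
    (fun x t => by simp only [splitMax, hψ.periodic_density t]) hK
    (fun x hx t => by simp [splitMax, hp.eq_zero x hx, hb.eq_zero x hx]) hℓv

/- One lamination step raises the constant `a` in the lower bound `max |b| (a p)` for the mixed
derivative by `voidFraction ψ`, for a suitable sign of `ℓ w`. -/
theorem exists_isLamination_integral_max_le [μ.IsAddHaarMeasure] (hψ : IsLaminationProfile ψ)
    (hvw : LinearIndependent ℝ ![v, w]) (hK : IsCompact K) (hp : SmoothSupportedIn K p)
    (hp₀ : ∀ x, 0 ≤ p x) (hb : SmoothSupportedIn K b) (a : ℝ) (hε : 0 < ε) :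
    ∃ u p', IsLamination μ K v w ε p p' u ∧
      ∫ x, max |b x| ((a + voidFraction ψ) * p x) ∂μ ≤
        ∫ x, max |b x + dirDeriv w (dirDeriv v u) x| (a * p' x) ∂μ + ε := by
  obtain ⟨s, hs, hgain⟩ := exists_sign_integral_max_le (μ := μ) hψ hK hp hp₀ hb a
  obtain ⟨ℓ, hℓv, hℓw⟩ := exists_functional_of_linearIndependent_pair hvw 1 s
  have hlim := tendsto_integral_splitMax (μ := μ) hψ hK hp hb a s hℓv
  have herr := tendsto_integral_abs_corrector_sub (μ := μ) hψ hK hp ℓ v w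
  obtain ⟨N, hlam, hlimN, herrN⟩ := ((eventually_isLamination_corrector (μ := μ) hψ hK hp hp₀ hℓv
    (hℓw ▸ hs) hε).and ((hlim.eventually_const_le (sub_lt_self _ (half_pos hε))).and
      (herr.eventually_le_const (half_pos hε)))).exists
  refine ⟨_, _, hlam, ?_⟩
  have hcomp := integral_splitMax_le (μ := μ) hψ.contDiff_density hK hp hb
    ((hlam.smoothSupportedIn.dirDeriv hK.isClosed v).dirDeriv hK.isClosed w) a s N ℓ
  rw [hℓv, hℓw, one_mul] at herrN
  linarith

theorem exists_isLamination_integral_abs_ge [μ.IsAddHaarMeasure] (hψ : IsLaminationProfile ψ)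
    (hvw : LinearIndependent ℝ ![v, w]) (hK : IsCompact K) (n : ℕ) (hp : SmoothSupportedIn K p)
    (hp₀ : ∀ x, 0 ≤ p x) (hb : SmoothSupportedIn K b) (hε : 0 < ε) :
    ∃ u p', IsLamination μ K v w ε p p' u ∧
      ∫ x, max |b x| (n * voidFraction ψ * p x) ∂μ ≤
        ∫ x, |b x + dirDeriv w (dirDeriv v u) x| ∂μ + ε := by
  induction n generalizing p b ε with
  | zero => exact ⟨0, p, .refl hp hp₀ hε.le, by simp [dirDeriv_zero, hε.le]⟩
  | succ n ih =>
    obtain ⟨u, p', hu, hgain⟩ := exists_isLamination_integral_max_le (μ := μ) hψ hvw hK hp hp₀ hb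
      (n * voidFraction ψ) (half_pos hε)
    have hvu := hu.smoothSupportedIn.dirDeriv hK.isClosed v
    obtain ⟨u', p'', hu', hgain'⟩ := ih hu.density_smoothSupportedIn hu.density_nonneg
      (hb.add (hvu.dirDeriv hK.isClosed w)) (half_pos hε)
    refine ⟨u + u', p'', add_halves ε ▸ hu.trans hK hp hu', ?_⟩
    rw [dirDeriv_add hu.smoothSupportedIn.differentiable hu'.smoothSupportedIn.differentiable,
      dirDeriv_add hvu.differentiable
        (hu'.smoothSupportedIn.dirDeriv hK.isClosed v).differentiable]
    simp only [Pi.add_apply, add_assoc, Nat.cast_add_one, add_one_mul] at hgain hgain' ⊢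
    linarith

end Lamination

section OrnsteinNonInequality

variable {E : Type*} [NormedAddCommGroup E] [NormedSpace ℝ E] [MeasurableSpace E] [BorelSpace E]
  {μ : Measure E} {K : Set E} {v w : E}

/-- `u` is a test function on `K` whose `C¹` norm is at most `1` and for which `∂_v² u` and
`∂_w² u` have `L¹(μ)` norm at most `C`. -/
structure IsBuildingBlock (μ : Measure E) (K : Set E) (v w : E) (C : ℝ) (u : E → ℝ) : Prop where
  smoothSupportedIn : SmoothSupportedIn K u
  abs_le : ∀ x, |u x| ≤ 1
  norm_fderiv_le : ∀ x, ‖fderiv ℝ u x‖ ≤ 1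
  integral_abs_fst_le : ∫ x, |dirDeriv v (dirDeriv v u) x| ∂μ ≤ C
  integral_abs_snd_le : ∫ x, |dirDeriv w (dirDeriv w u) x| ∂μ ≤ C

theorem IsLamination.isBuildingBlock [IsFiniteMeasureOnCompacts μ] (hK : IsCompact K)
    {p p' u : E → ℝ} (h : IsLamination μ K v w 1 p p' u) (hp : SmoothSupportedIn K p)
    (hp₀ : ∀ x, 0 ≤ p x) : IsBuildingBlock μ K v w (2 * ∫ x, p x ∂μ + 2 * 1) u where
  smoothSupportedIn := h.smoothSupportedIn
  abs_le := h.abs_le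
  norm_fderiv_le := h.norm_fderiv_le
  integral_abs_fst_le := integral_abs_le_of_integral_abs_sub_sub_le
    (((h.smoothSupportedIn.dirDeriv hK.isClosed v).dirDeriv hK.isClosed v).integrable hK)
    (hp.integrable hK) (h.density_smoothSupportedIn.integrable hK) hp₀ h.density_nonneg
    h.integral_fst_le h.integral_density_le
  integral_abs_snd_le := integral_abs_le_of_integral_abs_sub_sub_le
    (((h.smoothSupportedIn.dirDeriv hK.isClosed w).dirDeriv hK.isClosed w).integrable hK)
    (hp.integrable hK) (h.density_smoothSupportedIn.integrable hK) hp₀ h.density_nonneg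
    h.integral_snd_le h.integral_density_le

theorem abs_div_sqrt_one_add_sq_le (t : ℝ) : |t / √(1 + t ^ 2)| ≤ 1 := by
  rw [abs_div, abs_of_nonneg (sqrt_nonneg _)]
  exact div_le_one_of_le₀ (abs_le_sqrt (by linarith)) (sqrt_nonneg _)

theorem abs_le_mul_div_sqrt_one_add_sq_add_one (t : ℝ) : |t| ≤ t * (t / √(1 + t ^ 2)) + 1 := by
  have hr : 0 < √(1 + t ^ 2) := by positivity
  have hlower : |t| ≤ √(1 + t ^ 2) := abs_le_sqrt (by linarith)
  have hupper : √(1 + t ^ 2) ≤ 1 + |t| :=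
    sqrt_le_iff.2 ⟨by positivity, by nlinarith [sq_abs t, abs_nonneg t]⟩
  rw [mul_div, div_add_one hr.ne', le_div_iff₀ hr, ← abs_mul_abs_self t]
  nlinarith [abs_nonneg t]

theorem exists_smooth_sign [IsFiniteMeasureOnCompacts μ] {g : E → ℝ} (hg : SmoothSupportedIn K g)
    (hK : IsCompact K) :
    ∃ φ, SmoothSupportedIn K φ ∧ (∀ x, |φ x| ≤ 1) ∧
      ∫ x, |g x| ∂μ ≤ ∫ x, g x * φ x ∂μ + μ.real K := by
  have hsqrt : ContDiff ℝ ∞ fun x => (√(1 + g x ^ 2))⁻¹ :=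
    ((contDiff_const.add (hg.contDiff.pow 2)).sqrt fun x => by positivity).inv
      fun x => by positivity
  have hφ : SmoothSupportedIn K fun x => g x / √(1 + g x ^ 2) := hg.mul_contDiff hsqrt
  refine ⟨_, hφ, fun x => abs_div_sqrt_one_add_sq_le (g x), ?_⟩
  have hgi := (hg.integrable (μ := μ) hK).abs
  have hφi : Integrable (fun x => g x * (g x / √(1 + g x ^ 2))) μ :=
    (hg.mul_contDiff hφ.contDiff).integrable hK
  calc ∫ x, |g x| ∂μ = ∫ x in K, |g x| ∂μ :=
        (setIntegral_eq_integral_of_forall_compl_eq_zero fun x hx => by simp [hg.eq_zero x hx]).symm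
    _ ≤ ∫ x in K, (g x * (g x / √(1 + g x ^ 2)) + 1) ∂μ :=
        integral_mono hgi.integrableOn
          (hφi.integrableOn.add (integrableOn_const hK.measure_lt_top.ne))
          fun x => abs_le_mul_div_sqrt_one_add_sq_add_one (g x)
    _ = ∫ x, g x * (g x / √(1 + g x ^ 2)) ∂μ + μ.real K := by
        rw [integral_add hφi.integrableOn (integrableOn_const hK.measure_lt_top.ne),
          setIntegral_eq_integral_of_forall_compl_eq_zero fun x hx => by simp [hg.eq_zero x hx]]
        simp

variable [FiniteDimensional ℝ E]

theorem exists_smoothSupportedIn_integral_pos [IsFiniteMeasureOnCompacts μ] [μ.IsOpenPosMeasure]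
    (hK : (interior K).Nonempty) :
    ∃ p : E → ℝ, SmoothSupportedIn K p ∧ (∀ x, 0 ≤ p x) ∧ 0 < ∫ x, p x ∂μ := by
  obtain ⟨x, hx⟩ := hK
  obtain ⟨p, hpK, hpc, hp, hp01, hpx⟩ :=
    exists_contDiff_tsupport_subset (n := ⊤) (mem_interior_iff_mem_nhds.1 hx)
  have hp₀ : ∀ y, 0 ≤ p y := fun y => (hp01 (mem_range_self y)).1
  exact ⟨p, ⟨hp, fun y hy => image_eq_zero_of_notMem_tsupport fun h => hy (hpK h)⟩, hp₀,
    hp.continuous.integral_pos_of_hasCompactSupport_nonneg_nonzero hpc hp₀ (x := x) (by simp [hpx])⟩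

theorem exists_isBuildingBlock_le_integral_abs_mixed [μ.IsAddHaarMeasure]
    (hvw : LinearIndependent ℝ ![v, w]) (hK : IsCompact K) (hK' : (interior K).Nonempty) :
    ∃ C, ∀ M : ℝ, ∃ u, IsBuildingBlock μ K v w C u ∧
      M ≤ ∫ x, |dirDeriv w (dirDeriv v u) x| ∂μ := by
  obtain ⟨ψ, hψ⟩ := exists_isLaminationProfile
  obtain ⟨p, hp, hp₀, hpos⟩ := exists_smoothSupportedIn_integral_pos (μ := μ) hK'
  refine ⟨2 * ∫ x, p x ∂μ + 2 * 1, fun M => ?_⟩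
  have hgain : 0 < voidFraction ψ * ∫ x, p x ∂μ := mul_pos hψ.voidFraction_pos hpos
  obtain ⟨n, hn⟩ := exists_nat_ge ((M + 1) / (voidFraction ψ * ∫ x, p x ∂μ))
  obtain ⟨u, p', hu, hmixed⟩ :=
    exists_isLamination_integral_abs_ge (μ := μ) hψ hvw hK n hp hp₀ .zero one_pos
  refine ⟨u, hu.isBuildingBlock hK hp hp₀, ?_⟩
  have hmax : ∀ x, max |(0 : ℝ)| (n * voidFraction ψ * p x) = n * voidFraction ψ * p x :=
    fun x => by
      rw [abs_zero]
      exact max_eq_right (mul_nonneg (mul_nonneg n.cast_nonneg hψ.voidFraction_pos.le) (hp₀ x))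
  simp only [Pi.zero_apply, hmax, zero_add, integral_const_mul] at hmixed
  linarith [(div_le_iff₀ hgain).1 hn]

end OrnsteinNonInequality

section Resonance

theorem exists_summable_not_bounded {ι κ : Type*} {m : ι → κ → ℝ}
    (hrow : ∀ i, ∃ C, ∀ k, |m i k| ≤ C)
    (hm : ∀ C, ∃ i k, C < |m i k|) :
    ∃ a : κ → ℝ, (Summable fun k => |a k|) ∧ ∀ B, ∃ i, B < |∑' k, a k * m i k| := by
  by_contra! hbdd
  let row (i : ι) : lp (fun _ : κ => ℝ) ⊤ :=
    ⟨m i, memℓp_infty (by obtain ⟨C, hC⟩ := hrow i; exact ⟨C, by simpa [upperBounds] using hC⟩)⟩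
  let T (i : ι) : lp (fun _ : κ => ℝ) 1 →L[ℝ] ℝ :=
    lp.dualPairing ⊤ 1 (fun _ => ContinuousLinearMap.mul ℝ ℝ) (K := 1) (by simp) (row i)
  have hT : ∀ i a, T i a = ∑' k, a k * m i k := fun i a => by
    simp only [mul_comm (a _)]
    exact lp.dualPairing_apply ..
  obtain ⟨C, hC⟩ := banach_steinhaus (g := T) fun a => by
    obtain ⟨B, hB⟩ := hbdd a (by simpa using (lp.memℓp a).summable (by simp))
    exact ⟨B, fun i => by simpa [hT] using hB i⟩
  obtain ⟨i, k, hik⟩ := hm C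
  classical
  have hentry : T i (lp.single 1 k 1) = m i k := by
    rw [hT, tsum_eq_single k fun j hj => by simp [hj]]
    simp
  refine hik.not_ge ?_
  calc |m i k| = ‖T i (lp.single 1 k 1)‖ := by rw [hentry, Real.norm_eq_abs]
    _ ≤ ‖T i‖ * ‖(lp.single 1 k 1 : lp (fun _ : κ => ℝ) 1)‖ := (T i).le_opNorm _
    _ ≤ C := by simpa [lp.norm_single] using hC i

end Resonance

section Series

variable {ι X : Type*} [MeasurableSpace X] {μ : Measure X} {a : ι → ℝ} {F : ι → X → ℝ} {C : ℝ}

theorem summable_integral_norm_mul (hF : ∀ j, ∫ x, |F j x| ∂μ ≤ C)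
    (ha : Summable fun j => |a j|) : Summable fun j => ∫ x, ‖a j * F j x‖ ∂μ := by
  simp only [norm_mul, Real.norm_eq_abs, integral_const_mul]
  exact .of_nonneg_of_le
    (fun j => mul_nonneg (abs_nonneg _) (integral_nonneg fun x => abs_nonneg _))
    (fun j => mul_le_mul_of_nonneg_left (hF j) (abs_nonneg _)) (ha.mul_right C)

theorem integrable_tsum_of_summable_integral_norm [Countable ι] (hF : ∀ j, Integrable (F j) μ)
    (hsum : Summable fun j => ∫ x, ‖F j x‖ ∂μ) : Integrable (fun x => ∑' j, F j x) μ := by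
  refine ⟨(AEMeasurable.tsum fun j => (hF j).aemeasurable).aestronglyMeasurable, ?_⟩
  calc ∫⁻ x, ‖∑' j, F j x‖ₑ ∂μ ≤ ∫⁻ x, ∑' j, ‖F j x‖ₑ ∂μ :=
        lintegral_mono fun x => enorm_tsum_le_tsum_enorm
    _ = ∑' j, ∫⁻ x, ‖F j x‖ₑ ∂μ := lintegral_tsum fun j => (hF j).1.enorm
    _ = ∑' j, ENNReal.ofReal (∫ x, ‖F j x‖ ∂μ) := by
        simp only [ofReal_integral_norm_eq_lintegral_enorm (hF _)]
    _ = ENNReal.ofReal (∑' j, ∫ x, ‖F j x‖ ∂μ) :=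
        (ENNReal.ofReal_tsum_of_nonneg (fun j => integral_nonneg fun x => norm_nonneg _) hsum).symm
    _ < ⊤ := ENNReal.ofReal_lt_top

theorem integral_tsum_mul [Countable ι] (hF : ∀ j, Integrable (F j) μ)
    (hsum : Summable fun j => ∫ x, ‖F j x‖ ∂μ) {φ : X → ℝ} (hφ : AEStronglyMeasurable φ μ)
    (hφC : ∀ x, ‖φ x‖ ≤ C) :
    ∫ x, (∑' j, F j x) * φ x ∂μ = ∑' j, ∫ x, F j x * φ x ∂μ := by
  have hFφ : ∀ j, Integrable (fun x => F j x * φ x) μ := fun j =>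
    (hF j).mul_bdd hφ (ae_of_all _ hφC)
  have hsumφ : Summable fun j => ∫ x, ‖F j x * φ x‖ ∂μ := by
    refine .of_nonneg_of_le (fun j => integral_nonneg fun x => norm_nonneg _) (fun j => ?_)
      (hsum.mul_right C)
    rw [← integral_mul_const]
    refine integral_mono (hFφ j).norm ((hF j).norm.mul_const C) fun x => ?_
    simp only [norm_mul]
    exact mul_le_mul_of_nonneg_left (hφC x) (norm_nonneg _)
  simp only [← tsum_mul_right]
  exact (integral_tsum_of_summable_integral_norm hFφ hsumφ).symm

theorem contDiff_one_tsum_mul {E : Type*} [NormedAddCommGroup E] [NormedSpace ℝ E]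
    {u : ι → E → ℝ} (hu : ∀ j, ContDiff ℝ 1 (u j)) (hu₀ : ∀ j x, |u j x| ≤ C)
    (hu₁ : ∀ j x, ‖fderiv ℝ (u j) x‖ ≤ C) (ha : Summable fun j => |a j|) :
    ContDiff ℝ 1 fun x => ∑' j, a j * u j x := by
  refine mod_cast contDiff_tsum (N := 1) (v := fun _ j => |a j| * C)
    (fun j => mod_cast contDiff_const.mul (hu j)) (fun k _ => ha.mul_right C) fun k j x hk => ?_
  obtain rfl | rfl : k = 0 ∨ k = 1 := Nat.le_one_iff_eq_zero_or_eq_one.1 (mod_cast hk)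
  · rw [norm_iteratedFDeriv_zero, norm_mul]
    exact mul_le_mul_of_nonneg_left (hu₀ j x) (abs_nonneg _)
  · rw [norm_iteratedFDeriv_one, fderiv_const_mul ((hu j).differentiable one_ne_zero x), norm_smul]
    exact mul_le_mul_of_nonneg_left (hu₁ j x) (abs_nonneg _)

end Series

section WeakDerivatives

variable {E : Type*} [NormedAddCommGroup E] [NormedSpace ℝ E] [MeasurableSpace E]
  {μ : Measure E} {K : Set E} {v w : E} {C : ℝ}

/-- The distributional derivative `∂_v ∂_w f` is represented by a `μ`-integrable function. -/
def HasIntegrableWeakDeriv₂ (μ : Measure E) (v w : E) (f : E → ℝ) : Prop :=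
  ∃ g : E → ℝ, Integrable g μ ∧ ∀ φ : E → ℝ, ContDiff ℝ ∞ φ → HasCompactSupport φ →
    ∫ x, g x * φ x ∂μ = ∫ x, f x * dirDeriv v (dirDeriv w φ) x ∂μ

variable [BorelSpace E] {u : ℕ → E → ℝ} {a : ℕ → ℝ}

theorem integral_tsum_mul_dirDeriv_dirDeriv [IsFiniteMeasureOnCompacts μ] (hK : IsCompact K)
    (hu : ∀ j, SmoothSupportedIn K (u j)) (hu₀ : ∀ j x, |u j x| ≤ C)
    (ha : Summable fun j => |a j|) {φ : E → ℝ} (hφ : ContDiff ℝ ∞ φ)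
    (hφc : HasCompactSupport φ) (v w : E) :
    ∫ x, (∑' j, a j * u j x) * dirDeriv v (dirDeriv w φ) x ∂μ =
      ∑' j, a j * ∫ x, u j x * dirDeriv v (dirDeriv w φ) x ∂μ := by
  have hφ' := (SmoothSupportedIn.mk hφ fun _ => image_eq_zero_of_notMem_tsupport).dirDeriv
    (isClosed_tsupport φ) w |>.dirDeriv (isClosed_tsupport φ) v
  obtain ⟨B, hB⟩ := hφ'.exists_norm_le hφc
  have hint := fun j => integral_abs_le_of_eq_zero_off (hu₀ j) (hu j).eq_zero
    (hK.measure_lt_top (μ := μ))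
  rw [integral_tsum_mul (fun j => ((hu j).integrable hK).const_mul (a j))
    (summable_integral_norm_mul hint ha) hφ'.continuous.aestronglyMeasurable hB]
  simp only [mul_assoc, integral_const_mul]

variable [FiniteDimensional ℝ E] [μ.IsAddHaarMeasure]

theorem hasIntegrableWeakDeriv₂_tsum (hK : IsCompact K) (hu : ∀ j, SmoothSupportedIn K (u j))
    (hu₀ : ∀ j x, |u j x| ≤ 1) (hu₂ : ∀ j, ∫ x, |dirDeriv w (dirDeriv v (u j)) x| ∂μ ≤ C)
    (ha : Summable fun j => |a j|) :
    HasIntegrableWeakDeriv₂ μ v w fun x => ∑' j, a j * u j x := by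
  have hint : ∀ j, Integrable (fun x => a j * dirDeriv w (dirDeriv v (u j)) x) μ := fun j =>
    ((((hu j).dirDeriv hK.isClosed v).dirDeriv hK.isClosed w).integrable hK).const_mul _
  have hsum := summable_integral_norm_mul hu₂ ha
  refine ⟨_, integrable_tsum_of_summable_integral_norm hint hsum, fun φ hφ hφc => ?_⟩
  obtain ⟨B, hB⟩ := hφ.continuous.bounded_above_of_compact_support hφc
  rw [integral_tsum_mul_dirDeriv_dirDeriv hK hu hu₀ ha hφ hφc,
    integral_tsum_mul hint hsum hφ.continuous.aestronglyMeasurable hB]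
  simp only [mul_assoc, integral_const_mul, integral_mul_dirDeriv_dirDeriv hK (hu _) hφ]

theorem exists_summable_not_hasIntegrableWeakDeriv₂ (hK : IsCompact K)
    (hu : ∀ j, SmoothSupportedIn K (u j)) (hu₀ : ∀ j x, |u j x| ≤ 1)
    (hu₂ : ∀ M, ∃ j, M ≤ ∫ x, |dirDeriv w (dirDeriv v (u j)) x| ∂μ) :
    ∃ a : ℕ → ℝ, (Summable fun j => |a j|) ∧
      ¬HasIntegrableWeakDeriv₂ μ v w fun x => ∑' j, a j * u j x := by
  let m (φ : {φ : E → ℝ // SmoothSupportedIn K φ ∧ ∀ x, |φ x| ≤ 1}) (j : ℕ) : ℝ :=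
    ∫ x, u j x * dirDeriv v (dirDeriv w φ) x ∂μ
  have hrow : ∀ φ, ∃ B, ∀ j, |m φ j| ≤ B := by
    rintro ⟨φ, hφ, -⟩
    obtain ⟨B, hB⟩ := ((hφ.dirDeriv hK.isClosed w).dirDeriv hK.isClosed v).exists_norm_le hK
    refine ⟨1 * B * μ.real K, fun j => ?_⟩
    rw [← Real.norm_eq_abs]
    refine norm_integral_le_of_eq_zero_off (fun x => ?_)
      (fun x hx => by rw [(hu j).eq_zero x hx, zero_mul]) hK.measure_lt_top
    rw [norm_mul]
    exact mul_le_mul (hu₀ j x) (hB x) (norm_nonneg _) zero_le_one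
  have hm : ∀ B, ∃ φ j, B < |m φ j| := fun B => by
    obtain ⟨j, hj⟩ := hu₂ (B + μ.real K + 1)
    obtain ⟨φ, hφ, hφ₁, hφj⟩ := exists_smooth_sign (μ := μ)
      (((hu j).dirDeriv hK.isClosed v).dirDeriv hK.isClosed w) hK
    refine ⟨⟨φ, hφ, hφ₁⟩, j, lt_abs.2 (.inl ?_)⟩
    simp only [m, integral_mul_dirDeriv_dirDeriv hK (hu j) hφ.contDiff]
    linarith
  obtain ⟨a, ha, hunbdd⟩ := exists_summable_not_bounded hrow hm
  refine ⟨a, ha, fun ⟨h, hh, hweak⟩ => ?_⟩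
  obtain ⟨⟨φ, hφ, hφ₁⟩, hlarge⟩ := hunbdd (∫ x, |h x| ∂μ)
  refine hlarge.not_ge ?_
  rw [← integral_tsum_mul_dirDeriv_dirDeriv hK hu hu₀ ha hφ.contDiff (hφ.hasCompactSupport hK),
    ← hweak φ hφ.contDiff (hφ.hasCompactSupport hK), ← Real.norm_eq_abs]
  refine norm_integral_le_of_norm_le hh.abs (ae_of_all _ fun x => ?_)
  rw [norm_mul]
  exact mul_le_of_le_one_right (abs_nonneg _) (hφ₁ x)

theorem c1_function_with_L1_repeated_but_not_mixed_derivatives_general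
    (hvw : LinearIndependent ℝ ![v, w]) (hK : (interior K).Nonempty) :
    ∃ f : E → ℝ, ContDiff ℝ 1 f ∧ (∀ x ∉ K, f x = 0) ∧ HasIntegrableWeakDeriv₂ μ v v f ∧
      HasIntegrableWeakDeriv₂ μ w w f ∧ ¬HasIntegrableWeakDeriv₂ μ v w f := by
  obtain ⟨x, hx⟩ := hK
  obtain ⟨K', hK', hxK', hK'K⟩ := exists_compact_subset isOpen_interior hx
  obtain ⟨C, hC⟩ := exists_isBuildingBlock_le_integral_abs_mixed (μ := μ) hvw hK' ⟨x, hxK'⟩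
  choose u hu hmixed using fun n : ℕ => hC n
  have hsupp := fun n => (hu n).smoothSupportedIn
  have habs := fun n => (hu n).abs_le
  obtain ⟨a, ha, hnot⟩ := exists_summable_not_hasIntegrableWeakDeriv₂ (μ := μ) hK' hsupp habs
    fun M => (exists_nat_ge M).imp fun n hn => hn.trans (hmixed n)
  refine ⟨_, contDiff_one_tsum_mul (fun n => (hsupp n).contDiff.of_le (by simp)) habs
    (fun n => (hu n).norm_fderiv_le) ha, fun y hy => ?_,
    hasIntegrableWeakDeriv₂_tsum hK' hsupp habs (fun n => (hu n).integral_abs_fst_le) ha,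
    hasIntegrableWeakDeriv₂_tsum hK' hsupp habs (fun n => (hu n).integral_abs_snd_le) ha, hnot⟩
  have hy' : y ∉ K' := fun h => hy (interior_subset (hK'K h))
  simp [(hsupp _).eq_zero y hy']

end WeakDerivatives

/-- There exists a `C¹` (in particular Lipschitz) function `f` on `ℝ²` vanishing outside
`[-1,1]²` whose repeated distributional derivatives `∂_x² f` and `∂_y² f` are represented by
integrable functions, while the mixed distributional derivative `∂_x∂_y f` is not represented
by any integrable function. -/
theorem c1_function_with_L1_repeated_but_not_mixed_derivatives :
    ∃ f : ℝ × ℝ → ℝ, ContDiff ℝ 1 f ∧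
      (∀ p : ℝ × ℝ, p ∉ Set.Icc ((-1 : ℝ), (-1 : ℝ)) (1, 1) → f p = 0) ∧
      (∃ g : ℝ × ℝ → ℝ, Integrable g ∧ ∀ φ : ℝ × ℝ → ℝ, IsTest φ →
        ∫ p, g p * φ p = ∫ p, f p * pd1 (pd1 φ) p) ∧
      (∃ g : ℝ × ℝ → ℝ, Integrable g ∧ ∀ φ : ℝ × ℝ → ℝ, IsTest φ →
        ∫ p, g p * φ p = ∫ p, f p * pd2 (pd2 φ) p) ∧
      ¬ (∃ h : ℝ × ℝ → ℝ, Integrable h ∧ ∀ φ : ℝ × ℝ → ℝ, IsTest φ →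
        ∫ p, h p * φ p = ∫ p, f p * pd1 (pd2 φ) p) := by
  have hli : LinearIndependent ℝ ![((1 : ℝ), (0 : ℝ)), (0, 1)] := by
    simp [LinearIndependent.pair_iff]
  have hsquare : (interior (Set.Icc ((-1 : ℝ), (-1 : ℝ)) (1, 1))).Nonempty := by
    rw [← Icc_prod_Icc, interior_prod_eq, interior_Icc]
    exact ⟨0, by simp⟩
  obtain ⟨f, hf, hoff, ⟨g₁, hg₁, h₁⟩, ⟨g₂, hg₂, h₂⟩, hmixed⟩ :=
    c1_function_with_L1_repeated_but_not_mixed_derivatives_general (μ := volume) hli hsquare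
  exact ⟨f, hf, hoff, ⟨g₁, hg₁, fun φ hφ => h₁ φ hφ.1 hφ.2⟩, ⟨g₂, hg₂, fun φ hφ => h₂ φ hφ.1 hφ.2⟩,
    fun ⟨h, hh, hw⟩ => hmixed ⟨h, hh, fun φ hφ hφc => hw φ ⟨hφ, hφc⟩⟩⟩
end
end

section
/- There exist a probability density ϱ ∈ C^∞(ℝ²) (ϱ ≥ 0, ∫_{ℝ²} ϱ dx = 1) and a C^∞ vector field v: ℝ² → ℝ² such that |v| ∈ L¹(ℝ²), Δϱ = div v in the sense of distributions, but |∇ϱ| does not belong to L¹(ℝ²). -/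
open MeasureTheory Real

noncomputable section

/-- Euclidean magnitude of a vector in `ℝ²`. -/
def emag (v : ℝ × ℝ) : ℝ := Real.sqrt (v.1 ^ 2 + v.2 ^ 2)

/-!
The field `∇ϱ + (∂₂ψ, -∂₁ψ)` has divergence `Δϱ` for every stream function `ψ`, so it suffices to
choose `ϱ` and `ψ` such that this field is integrable while `∇ϱ` is not. For `ϱ = 1 + ∂₁L` and
`ψ = ∂₂L` the field is `(ΔL, 0)`, whereas `∇ϱ` contains the mixed derivative `∂₁∂₂L`, and in `L¹`
mixed derivatives are not controlled by the Laplacian (Ornstein's non-inequality). This failure is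
quantified by potentials `L = log (1 + K² (sin² Kx + sin² Ky)) / K²`, with `∂₁L` and `∂₂L` bounded
by `1`: on bounded squares `ΔL` stays bounded in `L¹` as `K → ∞`, while integrating `∂₁∂₂L` over a
quarter of each period cell gives a mixed difference of `L` and hence a lower bound of order
`log K` for its `L¹` norm. Cut off, weighted by `2⁻ᵏ` and placed far apart, such pieces with mixed
derivatives of norm at least `2ᵏ` sum to `ϱ`.
-/

open Set Filter Topology Function
open scoped ContDiff

section LocallyFiniteSums

lemma exists_finset_eventually_eq_zero_of_locallyFinite {ι X M : Type*} [TopologicalSpace X]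
    [Zero M] {f : ι → X → M} (hf : LocallyFinite fun k => support (f k)) (p : X) :
    ∃ s : Finset ι, ∀ᶠ q in 𝓝 p, ∀ k ∉ s, f k q = 0 := by
  obtain ⟨t, ht, hfin⟩ := hf p
  refine ⟨hfin.toFinset, ?_⟩
  filter_upwards [ht] with q hq k hk
  by_contra hne
  exact hk (hfin.mem_toFinset.2 ⟨q, hne, hq⟩)

lemma hasSum_tsum_of_locallyFinite {ι X M : Type*} [TopologicalSpace X] [AddCommMonoid M]
    [TopologicalSpace M] {f : ι → X → M} (hf : LocallyFinite fun k => support (f k)) (p : X) :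
    HasSum (fun k => f k p) (∑' k, f k p) :=
  (summable_of_hasFiniteSupport (hf.point_finite p)).hasSum

variable {ι E F : Type*} [NormedAddCommGroup E] [NormedSpace ℝ E]
  [NormedAddCommGroup F] [NormedSpace ℝ F] {f : ι → E → F}

lemma contDiff_tsum_of_locallyFinite {n : ℕ∞ω}
    (hf : LocallyFinite fun k => support (f k)) (hn : ∀ k, ContDiff ℝ n (f k)) :
    ContDiff ℝ n fun q => ∑' k, f k q := by
  refine contDiff_iff_contDiffAt.2 fun p => ?_
  obtain ⟨s, hs⟩ := exists_finset_eventually_eq_zero_of_locallyFinite hf p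
  exact (ContDiff.sum fun k _ => hn k).contDiffAt.congr_of_eventuallyEq
    (hs.mono fun q hq => tsum_eq_sum hq)

lemma hasSum_fderiv_of_locallyFinite (hf : LocallyFinite fun k => support (f k))
    (hd : ∀ k, Differentiable ℝ (f k)) (p : E) :
    HasSum (fun k => fderiv ℝ (f k) p) (fderiv ℝ (fun q => ∑' k, f k q) p) := by
  obtain ⟨s, hs⟩ := exists_finset_eventually_eq_zero_of_locallyFinite hf p
  have hsum : (fun q => ∑' k, f k q) =ᶠ[𝓝 p] fun q => ∑ k ∈ s, f k q :=
    hs.mono fun q hq => tsum_eq_sum hq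
  rw [hsum.fderiv_eq, fderiv_fun_sum fun k _ => hd k p]
  refine hasSum_sum_of_ne_finset_zero fun k hk => ?_
  have hzero : f k =ᶠ[𝓝 p] 0 := hs.mono fun q hq => hq k hk
  rw [hzero.fderiv_eq, fderiv_zero, Pi.zero_apply]

end LocallyFiniteSums

section SeparatedBalls

variable {ι X : Type*} [PseudoMetricSpace X] {x : ι → X} {R δ : ℝ}

lemma pairwise_disjoint_closedBall_of_separated (hδ : 0 < δ)
    (hx : Pairwise fun i j => 2 * R + δ ≤ dist (x i) (x j)) :
    Pairwise (Disjoint on fun k => Metric.closedBall (x k) R) := fun i j hij =>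
  Metric.closedBall_disjoint_closedBall (by linarith [hx hij])

lemma locallyFinite_closedBall_of_separated (hδ : 0 < δ)
    (hx : Pairwise fun i j => 2 * R + δ ≤ dist (x i) (x j)) :
    LocallyFinite fun k => Metric.closedBall (x k) R := by
  refine fun p => ⟨Metric.ball p (δ / 2), Metric.ball_mem_nhds p (half_pos hδ), ?_⟩
  refine Set.Subsingleton.finite fun i ⟨y, hyi, hyp⟩ j ⟨z, hzj, hzp⟩ => ?_
  by_contra hij
  rw [Metric.mem_closedBall'] at hyi
  rw [Metric.mem_closedBall] at hzj
  rw [Metric.mem_ball] at hyp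
  rw [Metric.mem_ball'] at hzp
  linarith [hx hij, dist_triangle4 (x i) y p (x j), dist_triangle p z (x j)]

end SeparatedBalls

section DisjointSupports

variable {ι X F : Type*} [Countable ι] [MeasurableSpace X] {μ : Measure X}
  [NormedAddCommGroup F] {s : ι → Set X}

lemma integrable_iff_summable_integral_norm_of_disjoint (hs : ∀ k, MeasurableSet (s k))
    (hdisj : Pairwise (Disjoint on s)) {w : ι → X → F} {W : X → F}
    (hw : ∀ k, Integrable (w k) μ) (hsupp : ∀ k, support (w k) ⊆ s k)
    (hsum : ∀ p, HasSum (fun k => w k p) (W p)) :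
    Integrable W μ ↔ Summable fun k => ∫ p, ‖w k p‖ ∂μ := by
  have hzero : ∀ k, ∀ p ∉ s k, w k p = 0 := fun k p hp => notMem_support.1 fun h => hp (hsupp k h)
  have hW : ∀ k, EqOn W (w k) (s k) := fun k p hp =>
    (hsum p).unique <| hasSum_single k fun j hj =>
      hzero j p fun hpj => (hdisj hj).notMem_of_mem_left hpj hp
  have hWsupp : ∀ p ∉ ⋃ k, s k, W p = 0 := fun p hp => by
    refine (hsum p).unique ?_
    simpa only [hzero _ p fun h => hp (mem_iUnion_of_mem _ h)] using hasSum_zero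
  have hnorm : ∀ k, ∫ p in s k, ‖W p‖ ∂μ = ∫ p, ‖w k p‖ ∂μ := fun k => by
    rw [setIntegral_congr_fun (hs k) fun p hp => congrArg norm (hW k hp)]
    exact setIntegral_eq_integral_of_forall_compl_eq_zero fun p hp => by
      rw [hzero k p hp, norm_zero]
  rw [← integrableOn_iff_integrable_of_support_subset (s := ⋃ k, s k)
    fun p hp => by_contra fun h => hp (hWsupp p h), ← funext hnorm]
  refine ⟨fun h => (hasSum_integral_iUnion hs hdisj h.norm).summable, fun h => ?_⟩
  exact integrableOn_iUnion_of_summable_integral_norm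
    (fun k => ((hw k).integrableOn.congr_fun (hW k).symm (hs k))) h

end DisjointSupports

section Translates

variable {ι E F : Type*} [NormedAddCommGroup E] {x : ι → E} {R δ : ℝ} [NormedAddCommGroup F]
  [NormedSpace ℝ F]

lemma support_smul_comp_sub_subset_closedBall {w : E → F}
    (hw : support w ⊆ Metric.closedBall 0 R) (c : ℝ) (a : E) :
    support (fun p => c • w (p - a)) ⊆ Metric.closedBall a R := fun p hp => by
  simpa only [mem_closedBall_iff_norm, sub_zero] using hw (right_ne_zero_of_smul hp)

lemma locallyFinite_support_smul_comp_sub (hδ : 0 < δ)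
    (hx : Pairwise fun i j => 2 * R + δ ≤ dist (x i) (x j)) {w : ι → E → F}
    (hw : ∀ k, support (w k) ⊆ Metric.closedBall 0 R) (c : ι → ℝ) :
    LocallyFinite fun k => support fun p => c k • w k (p - x k) :=
  (locallyFinite_closedBall_of_separated hδ hx).subset fun k =>
    support_smul_comp_sub_subset_closedBall (hw k) (c k) (x k)

lemma integrable_iff_summable_of_hasSum_smul_comp_sub [Countable ι] [MeasurableSpace E]
    [BorelSpace E] {μ : Measure E} [μ.IsAddRightInvariant] (hδ : 0 < δ)
    (hx : Pairwise fun i j => 2 * R + δ ≤ dist (x i) (x j)) {w : ι → E → F} {c : ι → ℝ} {W : E → F}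
    (hw : ∀ k, Integrable (w k) μ) (hsupp : ∀ k, support (w k) ⊆ Metric.closedBall 0 R)
    (hsum : ∀ p, HasSum (fun k => c k • w k (p - x k)) (W p)) :
    Integrable W μ ↔ Summable fun k => |c k| * ∫ p, ‖w k p‖ ∂μ := by
  have hnorm : ∀ k, ∫ p, ‖c k • w k (p - x k)‖ ∂μ = |c k| * ∫ p, ‖w k p‖ ∂μ := fun k => by
    simp_rw [norm_smul, integral_const_mul, Real.norm_eq_abs]
    rw [integral_sub_right_eq_self fun q => ‖w k q‖]
  rw [integrable_iff_summable_integral_norm_of_disjoint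
    (fun k => Metric.isClosed_closedBall.measurableSet)
    (pairwise_disjoint_closedBall_of_separated hδ hx)
    (fun k => ((hw k).comp_sub_right (x k)).smul (c k))
    (fun k => support_smul_comp_sub_subset_closedBall (hsupp k) (c k) (x k)) hsum]
  exact iff_of_eq (congrArg Summable (funext hnorm))

end Translates

section PartialDerivatives

variable {f g : ℝ × ℝ → ℝ} {p : ℝ × ℝ} {m n : ℕ∞ω}

lemma contDiff_pd1 (hf : ContDiff ℝ n f) (hmn : m + 1 ≤ n) : ContDiff ℝ m (pd1 f) :=
  (hf.fderiv_right hmn).clm_apply contDiff_const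

lemma contDiff_pd2 (hf : ContDiff ℝ n f) (hmn : m + 1 ≤ n) : ContDiff ℝ m (pd2 f) :=
  (hf.fderiv_right hmn).clm_apply contDiff_const

lemma continuous_pd1_pd1_add_pd2_pd2 {f : ℝ × ℝ → ℝ} (hf : ContDiff ℝ 2 f) :
    Continuous fun p => pd1 (pd1 f) p + pd2 (pd2 f) p := by
  have h12 : (1 : ℕ∞ω) + 1 ≤ 2 := by norm_num
  have h01 : (0 : ℕ∞ω) + 1 ≤ 1 := by norm_num
  exact (contDiff_pd1 (contDiff_pd1 hf h12) h01).continuous.add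
    (contDiff_pd2 (contDiff_pd2 hf h12) h01).continuous

lemma fderiv_apply_eq_pd1_add_pd2 (f : ℝ × ℝ → ℝ) (p w : ℝ × ℝ) :
    fderiv ℝ f p w = w.1 * pd1 f p + w.2 * pd2 f p := by
  have hw : w = w.1 • ((1 : ℝ), (0 : ℝ)) + w.2 • ((0 : ℝ), (1 : ℝ)) := by ext <;> simp
  conv_lhs => rw [hw, map_add, map_smul, map_smul]
  rfl

lemma hasDerivAt_fst_of_differentiableAt (hf : DifferentiableAt ℝ f p) :
    HasDerivAt (fun t => f (t, p.2)) (pd1 f p) p.1 :=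
  hf.hasFDerivAt.comp_hasDerivAt (f := fun t => (t, p.2)) p.1
    ((hasDerivAt_id p.1).prodMk (hasDerivAt_const p.1 p.2))

lemma hasDerivAt_snd_of_differentiableAt (hf : DifferentiableAt ℝ f p) :
    HasDerivAt (fun t => f (p.1, t)) (pd2 f p) p.2 :=
  hf.hasFDerivAt.comp_hasDerivAt (f := fun t => (p.1, t)) p.2
    ((hasDerivAt_const p.2 p.1).prodMk (hasDerivAt_id p.2))

lemma pd1_pd2_comm (hf : ContDiff ℝ 2 f) (p : ℝ × ℝ) : pd1 (pd2 f) p = pd2 (pd1 f) p := by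
  have hd : DifferentiableAt ℝ (fderiv ℝ f) p :=
    (hf.fderiv_right (m := 1) (by norm_num)).differentiable one_ne_zero p
  have hsymm : IsSymmSndFDerivAt ℝ f p := hf.contDiffAt.isSymmSndFDerivAt (by simp)
  unfold pd1 pd2
  rw [fderiv_clm_apply hd (differentiableAt_const _),
    fderiv_clm_apply hd (differentiableAt_const _)]
  simpa using hsymm _ _

lemma pd1_mul (hf : DifferentiableAt ℝ f p) (hg : DifferentiableAt ℝ g p) :
    pd1 (fun q => f q * g q) p = pd1 f p * g p + f p * pd1 g p := by
  simp only [pd1, fderiv_fun_mul hf hg, add_apply, smul_apply,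
    smul_eq_mul]
  ring

lemma pd2_mul (hf : DifferentiableAt ℝ f p) (hg : DifferentiableAt ℝ g p) :
    pd2 (fun q => f q * g q) p = pd2 f p * g p + f p * pd2 g p := by
  simp only [pd2, fderiv_fun_mul hf hg, add_apply, smul_apply,
    smul_eq_mul]
  ring

lemma pd1_const_mul_comp_sub (c : ℝ) (f : ℝ × ℝ → ℝ) (a p : ℝ × ℝ) :
    pd1 (fun q => c * f (q - a)) p = c * pd1 f (p - a) := by
  change fderiv ℝ (c • fun q => f (q - a)) p _ = _
  rw [fderiv_const_smul_field, Pi.smul_apply, fderiv_comp_sub]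
  rfl

lemma pd2_const_mul_comp_sub (c : ℝ) (f : ℝ × ℝ → ℝ) (a p : ℝ × ℝ) :
    pd2 (fun q => c * f (q - a)) p = c * pd2 f (p - a) := by
  change fderiv ℝ (c • fun q => f (q - a)) p _ = _
  rw [fderiv_const_smul_field, Pi.smul_apply, fderiv_comp_sub]
  rfl

lemma pd2_eq_pd1_comp_swap (hf : DifferentiableAt ℝ f p) :
    pd2 f p = pd1 (f ∘ Prod.swap) p.swap := by
  have hswap : DifferentiableAt ℝ (Prod.swap : ℝ × ℝ → ℝ × ℝ) p.swap :=
    differentiableAt_snd.prodMk differentiableAt_fst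
  exact (hasDerivAt_snd_of_differentiableAt hf).unique
    (hasDerivAt_fst_of_differentiableAt (DifferentiableAt.comp p.swap (by simpa using hf) hswap))

lemma support_pd1_subset_tsupport (f : ℝ × ℝ → ℝ) : support (pd1 f) ⊆ tsupport f := fun p hp =>
  support_fderiv_subset ℝ fun h => hp (by rw [pd1, h, zero_apply])

lemma support_pd2_subset_tsupport (f : ℝ × ℝ → ℝ) : support (pd2 f) ⊆ tsupport f := fun p hp =>
  support_fderiv_subset ℝ fun h => hp (by rw [pd2, h, zero_apply])

end PartialDerivatives

lemma integral_mul_fderiv_eq_neg_of_hasCompactSupport {E : Type*} [NormedAddCommGroup E]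
    [NormedSpace ℝ E] [FiniteDimensional ℝ E] [MeasurableSpace E] [BorelSpace E] {μ : Measure E}
    [μ.IsAddHaarMeasure] {f g : E → ℝ} (hf : ContDiff ℝ 1 f) (hg : ContDiff ℝ 1 g)
    (hgc : HasCompactSupport g) (w : E) :
    ∫ x, f x * fderiv ℝ g x w ∂μ = -∫ x, fderiv ℝ f x w * g x ∂μ := by
  have hf' : Continuous fun x => fderiv ℝ f x w :=
    (hf.continuous_fderiv one_ne_zero).clm_apply continuous_const
  have hg' : Continuous fun x => fderiv ℝ g x w :=
    (hg.continuous_fderiv one_ne_zero).clm_apply continuous_const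
  exact integral_mul_fderiv_eq_neg_fderiv_mul_of_integrable
    ((hf'.mul hg.continuous).integrable_of_hasCompactSupport hgc.mul_left)
    ((hf.continuous.mul hg').integrable_of_hasCompactSupport (hgc.fderiv_apply ℝ w).mul_left)
    ((hf.continuous.mul hg.continuous).integrable_of_hasCompactSupport hgc.mul_left)
    (fun x _ => hf.differentiable one_ne_zero x) (fun x _ => hg.differentiable one_ne_zero x)

section GradAddSkewGrad

variable {r s φ : ℝ × ℝ → ℝ} {m n : ℕ∞ω}

/-- The planar vector field `∇r - ∇^⊥s`, where `∇^⊥s = (-∂₂s, ∂₁s)` is the skew gradient of the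
stream function `s`. Its divergence is `Δr`, whatever `s` is, and `s` serves to make the field
integrable. -/
def gradAddSkewGrad (r s : ℝ × ℝ → ℝ) (p : ℝ × ℝ) : ℝ × ℝ :=
  (pd1 r p + pd2 s p, pd2 r p - pd1 s p)

lemma contDiff_gradAddSkewGrad (hr : ContDiff ℝ n r) (hs : ContDiff ℝ n s) (hmn : m + 1 ≤ n) :
    ContDiff ℝ m (gradAddSkewGrad r s) :=
  ((contDiff_pd1 hr hmn).add (contDiff_pd2 hs hmn)).prodMk
    ((contDiff_pd2 hr hmn).sub (contDiff_pd1 hs hmn))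

lemma gradAddSkewGrad_const_mul_comp_sub (c : ℝ) (r s : ℝ × ℝ → ℝ) (a p : ℝ × ℝ) :
    gradAddSkewGrad (fun q => c * r (q - a)) (fun q => c * s (q - a)) p
      = c • gradAddSkewGrad r s (p - a) := by
  simp only [gradAddSkewGrad, pd1_const_mul_comp_sub, pd2_const_mul_comp_sub, Prod.smul_mk,
    smul_eq_mul, mul_add, mul_sub]

lemma support_gradAddSkewGrad_subset {K : Set (ℝ × ℝ)} (hr : tsupport r ⊆ K)
    (hs : tsupport s ⊆ K) : support (gradAddSkewGrad r s) ⊆ K := by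
  intro p
  contrapose!
  intro hp
  have hr1 : pd1 r p = 0 := notMem_support.1 fun h => hp (hr (support_pd1_subset_tsupport r h))
  have hr2 : pd2 r p = 0 := notMem_support.1 fun h => hp (hr (support_pd2_subset_tsupport r h))
  have hs1 : pd1 s p = 0 := notMem_support.1 fun h => hp (hs (support_pd1_subset_tsupport s h))
  have hs2 : pd2 s p = 0 := notMem_support.1 fun h => hp (hs (support_pd2_subset_tsupport s h))
  simp [gradAddSkewGrad, hr1, hr2, hs1, hs2]

lemma integral_mul_laplacian_eq_neg_integral_fderiv_gradAddSkewGrad (hr : ContDiff ℝ 1 r)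
    (hs : ContDiff ℝ 1 s) (hφ : ContDiff ℝ 2 φ) (hφc : HasCompactSupport φ) :
    ∫ p, r p * (pd1 (pd1 φ) p + pd2 (pd2 φ) p)
      = -∫ p, fderiv ℝ φ p (gradAddSkewGrad r s p) := by
  have h01 : (0 : ℕ∞ω) + 1 ≤ 1 := by norm_num
  have h12 : (1 : ℕ∞ω) + 1 ≤ 2 := by norm_num
  have hφ1 : ContDiff ℝ 1 (pd1 φ) := contDiff_pd1 hφ h12
  have hφ2 : ContDiff ℝ 1 (pd2 φ) := contDiff_pd2 hφ h12
  have hφ1c : HasCompactSupport (pd1 φ) := hφc.fderiv_apply ℝ _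
  have hφ2c : HasCompactSupport (pd2 φ) := hφc.fderiv_apply ℝ _
  have integrable_mul {u w : ℝ × ℝ → ℝ} (hu : Continuous u) (hw : Continuous w)
      (hwc : HasCompactSupport w) : Integrable fun p => u p * w p :=
    (hu.mul hw).integrable_of_hasCompactSupport hwc.mul_left
  have hr11 :=
    integrable_mul hr.continuous (contDiff_pd1 hφ1 h01).continuous (hφ1c.fderiv_apply ℝ _)
  have hr22 :=
    integrable_mul hr.continuous (contDiff_pd2 hφ2 h01).continuous (hφ2c.fderiv_apply ℝ _)
  have hr1 := integrable_mul (contDiff_pd1 hr h01).continuous hφ1.continuous hφ1c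
  have hr2 := integrable_mul (contDiff_pd2 hr h01).continuous hφ2.continuous hφ2c
  have hs1 := integrable_mul (contDiff_pd2 hs h01).continuous hφ1.continuous hφ1c
  have hs2 := integrable_mul (contDiff_pd1 hs h01).continuous hφ2.continuous hφ2c
  have hrs1 : Integrable fun p => pd1 r p * pd1 φ p + pd2 s p * pd1 φ p := hr1.add hs1
  have hrs2 : Integrable fun p => pd2 r p * pd2 φ p - pd1 s p * pd2 φ p := hr2.sub hs2
  have hgrad1 : ∫ p, r p * pd1 (pd1 φ) p = -∫ p, pd1 r p * pd1 φ p :=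
    integral_mul_fderiv_eq_neg_of_hasCompactSupport hr hφ1 hφ1c _
  have hgrad2 : ∫ p, r p * pd2 (pd2 φ) p = -∫ p, pd2 r p * pd2 φ p :=
    integral_mul_fderiv_eq_neg_of_hasCompactSupport hr hφ2 hφ2c _
  have hskew1 : ∫ p, s p * pd2 (pd1 φ) p = -∫ p, pd2 s p * pd1 φ p :=
    integral_mul_fderiv_eq_neg_of_hasCompactSupport hs hφ1 hφ1c _
  have hskew2 : ∫ p, s p * pd1 (pd2 φ) p = -∫ p, pd1 s p * pd2 φ p :=
    integral_mul_fderiv_eq_neg_of_hasCompactSupport hs hφ2 hφ2c _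
  simp_rw [pd1_pd2_comm hφ] at hskew2
  simp_rw [fderiv_apply_eq_pd1_add_pd2, gradAddSkewGrad, add_mul, sub_mul, mul_add]
  rw [integral_add hr11 hr22, integral_add hrs1 hrs2, integral_add hr1 hs1,
    integral_sub hr2 hs2]
  linarith

end GradAddSkewGrad

section IteratedIntegrals

lemma integrableOn_Ioc_prod_Ioc {F : Type*} [NormedAddCommGroup F] {h : ℝ × ℝ → F}
    (hh : Continuous h) (a b c d : ℝ) : IntegrableOn h (Ioc a b ×ˢ Ioc c d) :=
  (hh.continuousOn.integrableOn_compact (isCompact_Icc.prod isCompact_Icc)).mono_set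
    (prod_mono Ioc_subset_Icc_self Ioc_subset_Icc_self)

lemma setIntegral_Ioc_prod_Ioc_eq_intervalIntegral {F : Type*} [NormedAddCommGroup F]
    [NormedSpace ℝ F] {h : ℝ × ℝ → F} (hh : Continuous h) {a b c d : ℝ} (hab : a ≤ b)
    (hcd : c ≤ d) :
    ∫ p in Ioc a b ×ˢ Ioc c d, h p = ∫ x in a..b, ∫ y in c..d, h (x, y) := by
  simp only [intervalIntegral.integral_of_le hab, intervalIntegral.integral_of_le hcd]
  exact setIntegral_prod h (integrableOn_Ioc_prod_Ioc hh a b c d)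

lemma integral_integral_const_mul_mul_add_const {q : ℝ → ℝ} (hq : Continuous q)
    (a b c d : ℝ) :
    ∫ x in a..b, ∫ y in a..b, (c * (q x * q y) + d)
      = c * (∫ x in a..b, q x) ^ 2 + d * (b - a) ^ 2 := by
  have integral_const_mul_add_const (c d : ℝ) :
      ∫ x in a..b, (c * q x + d) = c * (∫ x in a..b, q x) + d * (b - a) := by
    rw [intervalIntegral.integral_add ((hq.const_mul c).intervalIntegrable a b)
      intervalIntegrable_const, intervalIntegral.integral_const_mul,
      intervalIntegral.integral_const, smul_eq_mul, mul_comm d]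
  have hinner : ∀ x, ∫ y in a..b, (c * (q x * q y) + d)
      = c * (∫ y in a..b, q y) * q x + d * (b - a) := fun x => by
    simp_rw [← mul_assoc c, integral_const_mul_add_const, mul_right_comm]
  simp_rw [hinner]
  rw [integral_const_mul_add_const]
  ring

lemma integral_integral_pd2_pd1 {f : ℝ × ℝ → ℝ} (hf : ContDiff ℝ 2 f) (a b c d : ℝ) :
    ∫ x in a..b, ∫ y in c..d, pd2 (pd1 f) (x, y)
      = f (b, d) - f (b, c) - (f (a, d) - f (a, c)) := by
  have hf1 : ContDiff ℝ 1 (pd1 f) := contDiff_pd1 hf (by norm_num)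
  have hf2 : Continuous (pd2 (pd1 f)) := (contDiff_pd2 (m := 0) hf1 (by norm_num)).continuous
  have hd : Differentiable ℝ f := hf.differentiable two_ne_zero
  have hinner : ∀ x, ∫ y in c..d, pd2 (pd1 f) (x, y) = pd1 f (x, d) - pd1 f (x, c) := fun x =>
    intervalIntegral.integral_eq_sub_of_hasDerivAt (f := fun y => pd1 f (x, y))
      (f' := fun y => pd2 (pd1 f) (x, y))
      (fun y _ => hasDerivAt_snd_of_differentiableAt (hf1.differentiable one_ne_zero (x, y)))
      ((hf2.comp (Continuous.prodMk_right x)).intervalIntegrable c d)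
  simp_rw [hinner]
  exact intervalIntegral.integral_eq_sub_of_hasDerivAt
    (f := fun x => f (x, d) - f (x, c))
    (fun x _ => (hasDerivAt_fst_of_differentiableAt (hd (x, d))).sub
      (hasDerivAt_fst_of_differentiableAt (hd (x, c))))
    (((hf1.continuous.comp (Continuous.prodMk_left d)).sub
      (hf1.continuous.comp (Continuous.prodMk_left c))).intervalIntegrable a b)

lemma setIntegral_Ioc_prod_Ioc_eq_sq_mul_of_periodic {h : ℝ × ℝ → ℝ} (hh : Continuous h) {T : ℝ}
    (hT : 0 ≤ T) (h1 : Periodic h (T, 0)) (h2 : Periodic h (0, T)) (n : ℕ) :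
    ∫ p in Ioc 0 (n * T) ×ˢ Ioc 0 (n * T), h p
      = n ^ 2 * ∫ p in Ioc 0 T ×ˢ Ioc 0 T, h p := by
  have hinner : ∀ x, ∫ y in 0..n * T, h (x, y) = n * ∫ y in 0..T, h (x, y) := fun x => by
    have hper : Periodic (fun y => h (x, y)) T := fun y => by simpa using h2 (x, y)
    simpa using hper.intervalIntegral_add_zsmul_eq n 0
      fun _ _ => (hh.comp (Continuous.prodMk_right x)).intervalIntegrable _ _
  have hper : Periodic (fun x => ∫ y in 0..T, h (x, y)) T := fun x =>
    intervalIntegral.integral_congr fun y _ => by simpa using h1 (x, y)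
  have hcont : Continuous fun x => ∫ y in 0..T, h (x, y) :=
    intervalIntegral.continuous_parametric_intervalIntegral_of_continuous'
      (f := fun x y => h (x, y)) hh 0 T
  have houter : ∫ x in 0..n * T, ∫ y in 0..T, h (x, y)
      = n * ∫ x in 0..T, ∫ y in 0..T, h (x, y) := by
    simpa using hper.intervalIntegral_add_zsmul_eq n 0 fun _ _ => hcont.intervalIntegrable _ _
  have hnT : 0 ≤ n * T := by positivity
  rw [setIntegral_Ioc_prod_Ioc_eq_intervalIntegral hh hnT hnT,
    setIntegral_Ioc_prod_Ioc_eq_intervalIntegral hh hT hT]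
  simp_rw [hinner]
  rw [intervalIntegral.integral_const_mul, houter]
  ring

lemma periodic_fderiv {E F : Type*} [NormedAddCommGroup E] [NormedSpace ℝ E]
    [NormedAddCommGroup F] [NormedSpace ℝ F] {f : E → F} {w : E} (hf : Periodic f w) :
    Periodic (fderiv ℝ f) w := fun p => by
  rw [← fderiv_comp_add_right, funext hf]

lemma sq_mul_abs_mixed_difference_le_setIntegral_abs_pd2_pd1 {f : ℝ × ℝ → ℝ}
    (hf : ContDiff ℝ 2 f) {T a : ℝ} (ha : 0 ≤ a) (haT : a ≤ T) (h1 : Periodic f (T, 0))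
    (h2 : Periodic f (0, T)) (n : ℕ) :
    n ^ 2 * |f (a, a) - f (a, 0) - (f (0, a) - f (0, 0))|
      ≤ ∫ p in Ioc 0 (n * T) ×ˢ Ioc 0 (n * T), |pd2 (pd1 f) p| := by
  have hcont : Continuous (pd2 (pd1 f)) :=
    (contDiff_pd2 (m := 0) (contDiff_pd1 (m := 1) hf (by norm_num)) (by norm_num)).continuous
  have hper {w : ℝ × ℝ} (hw : Periodic f w) : Periodic (fun p => |pd2 (pd1 f) p|) w := fun p => by
    have h1' : Periodic (pd1 f) w := fun q => by rw [pd1, periodic_fderiv hw, pd1]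
    simp only [pd2, periodic_fderiv h1' p]
  rw [setIntegral_Ioc_prod_Ioc_eq_sq_mul_of_periodic hcont.abs (ha.trans haT) (hper h1) (hper h2),
    ← integral_integral_pd2_pd1 hf, ← setIntegral_Ioc_prod_Ioc_eq_intervalIntegral hcont ha ha]
  gcongr
  refine (abs_integral_le_integral_abs).trans (setIntegral_mono_set ?_ ?_ ?_)
  · exact integrableOn_Ioc_prod_Ioc hcont.abs _ _ _ _
  · exact Eventually.of_forall fun p => abs_nonneg _
  · exact (prod_mono (Ioc_subset_Ioc_right haT) (Ioc_subset_Ioc_right haT)).eventuallyLE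

end IteratedIntegrals

section LatticePotential

variable {K : ℝ}

/-- The denominator `1 + K² (sin² Kx + sin² Ky)`, which vanishes nowhere but drops to `1` on the
lattice `(π / K) ℤ²`. -/
def latticeDenom (K : ℝ) (p : ℝ × ℝ) : ℝ := 1 + K ^ 2 * (sin (K * p.1) ^ 2 + sin (K * p.2) ^ 2)

/-- A logarithmic potential with smoothed poles on the lattice `(π / K) ℤ²`, normalised so that its
first partial derivatives are at most `1` in absolute value. Near the origin it resembles
`K⁻² log (1 + K⁴ |p|²)`. -/
def latticePotential (K : ℝ) (p : ℝ × ℝ) : ℝ := log (latticeDenom K p) / K ^ 2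

/-- The one-dimensional peak `K / (1 + K² sin² u)`, whose mass over a period is bounded
independently of `K`. The products `latticeProfile K (K x) * latticeProfile K (K y)` dominate the
Laplacian of `latticePotential K`. -/
def latticeProfile (K u : ℝ) : ℝ := K / (1 + K ^ 2 * sin u ^ 2)

lemma continuous_latticeProfile (K : ℝ) : Continuous (latticeProfile K) :=
  continuous_const.div (by fun_prop) fun u => by positivity

lemma periodic_latticeProfile (K : ℝ) : Periodic (latticeProfile K) π := fun u => by
  simp only [latticeProfile, sin_add_pi, neg_sq]

lemma latticeProfile_nonneg (hK : 0 ≤ K) (u : ℝ) : 0 ≤ latticeProfile K u :=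
  div_nonneg hK (by positivity)

lemma one_le_latticeDenom (K : ℝ) (p : ℝ × ℝ) : 1 ≤ latticeDenom K p :=
  le_add_of_nonneg_right (by positivity)

lemma latticeDenom_ne_zero (K : ℝ) (p : ℝ × ℝ) : latticeDenom K p ≠ 0 :=
  (one_pos.trans_le (one_le_latticeDenom K p)).ne'

lemma contDiff_latticeDenom {n : ℕ∞ω} (K : ℝ) : ContDiff ℝ n (latticeDenom K) := by
  unfold latticeDenom
  fun_prop

lemma contDiff_latticePotential {n : ℕ∞ω} (K : ℝ) : ContDiff ℝ n (latticePotential K) :=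
  ((contDiff_latticeDenom K).log (latticeDenom_ne_zero K)).div_const _

lemma latticeDenom_swap (K : ℝ) (p : ℝ × ℝ) : latticeDenom K p.swap = latticeDenom K p := by
  simp only [latticeDenom, Prod.fst_swap, Prod.snd_swap, add_comm]

lemma latticePotential_comp_swap (K : ℝ) :
    latticePotential K ∘ Prod.swap = latticePotential K :=
  funext fun p => by simp only [comp_apply, latticePotential, latticeDenom_swap]

lemma periodic_latticePotential (hK : K ≠ 0) :
    Periodic (latticePotential K) (π / K, 0) ∧ Periodic (latticePotential K) (0, π / K) := by
  constructor <;> intro p <;>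
    simp [latticePotential, latticeDenom, mul_add, mul_div_cancel₀ _ hK, sin_add_pi]

lemma hasDerivAt_latticeDenom_fst (K x y : ℝ) :
    HasDerivAt (fun t => latticeDenom K (t, y)) (K ^ 3 * sin (2 * (K * x))) x := by
  have hsin := ((hasDerivAt_id x).const_mul K).sin.pow 2
  refine (((hsin.add_const (sin (K * y) ^ 2)).const_mul (K ^ 2)).const_add 1).congr_deriv ?_
  simp only [id, sin_two_mul]
  ring

lemma pd1_latticePotential (hK : K ≠ 0) (p : ℝ × ℝ) :
    pd1 (latticePotential K) p = K * sin (2 * (K * p.1)) / latticeDenom K p := by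
  have hd := (contDiff_latticePotential (n := 1) K).differentiable one_ne_zero p
  refine (hasDerivAt_fst_of_differentiableAt hd).unique <|
    (((hasDerivAt_latticeDenom_fst K p.1 p.2).log (latticeDenom_ne_zero K p)).div_const
      (K ^ 2)).congr_deriv ?_
  field_simp

lemma pd1_pd1_latticePotential (hK : K ≠ 0) (p : ℝ × ℝ) :
    pd1 (pd1 (latticePotential K)) p
      = 2 * K ^ 2 * cos (2 * (K * p.1)) / latticeDenom K p
        - K ^ 4 * sin (2 * (K * p.1)) ^ 2 / latticeDenom K p ^ 2 := by
  have hd := (contDiff_pd1 (m := 1) (contDiff_latticePotential (n := 2) K)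
    (by norm_num)).differentiable one_ne_zero p
  have hsin := (((hasDerivAt_id p.1).const_mul K).const_mul 2).sin.const_mul K
  refine (hasDerivAt_fst_of_differentiableAt hd).unique ?_
  simp_rw [pd1_latticePotential hK]
  refine (hsin.div (hasDerivAt_latticeDenom_fst K p.1 p.2)
    (latticeDenom_ne_zero K p)).congr_deriv ?_
  have hD := latticeDenom_ne_zero K p
  simp only [id]
  field_simp

lemma pd2_latticePotential (K : ℝ) (p : ℝ × ℝ) :
    pd2 (latticePotential K) p = pd1 (latticePotential K) p.swap := by
  have hd := (contDiff_latticePotential (n := 1) K).differentiable one_ne_zero p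
  rw [pd2_eq_pd1_comp_swap hd, latticePotential_comp_swap]

lemma pd2_pd2_latticePotential (K : ℝ) (p : ℝ × ℝ) :
    pd2 (pd2 (latticePotential K)) p = pd1 (pd1 (latticePotential K)) p.swap := by
  have hd := (contDiff_pd2 (m := 1) (contDiff_latticePotential (n := 2) K)
    (by norm_num)).differentiable one_ne_zero p
  have hswap : pd2 (latticePotential K) ∘ Prod.swap = pd1 (latticePotential K) :=
    funext fun q => by rw [comp_apply, pd2_latticePotential, Prod.swap_swap]
  rw [pd2_eq_pd1_comp_swap hd, hswap]

lemma abs_pd1_latticePotential_le_one (hK : K ≠ 0) (p : ℝ × ℝ) :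
    |pd1 (latticePotential K) p| ≤ 1 := by
  have hD : 0 < latticeDenom K p := one_pos.trans_le (one_le_latticeDenom K p)
  rw [pd1_latticePotential hK, abs_div, abs_of_pos hD, div_le_one hD]
  calc |K * sin (2 * (K * p.1))| = 2 * |K * sin (K * p.1)| * |cos (K * p.1)| := by
        rw [sin_two_mul, ← mul_assoc, ← mul_assoc, mul_comm K 2, mul_assoc 2, abs_mul, abs_mul,
          abs_two]
    _ ≤ |K * sin (K * p.1)| ^ 2 + |cos (K * p.1)| ^ 2 := two_mul_le_add_sq _ _
    _ ≤ latticeDenom K p := by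
        rw [sq_abs, sq_abs, mul_pow, latticeDenom]
        nlinarith [cos_sq_le_one (K * p.1), sq_nonneg (K * sin (K * p.2))]

lemma abs_pd2_latticePotential_le_one (hK : K ≠ 0) (p : ℝ × ℝ) :
    |pd2 (latticePotential K) p| ≤ 1 := by
  rw [pd2_latticePotential]
  exact abs_pd1_latticePotential_le_one hK p.swap

lemma laplacian_latticePotential (hK : K ≠ 0) (p : ℝ × ℝ) :
    pd1 (pd1 (latticePotential K)) p + pd2 (pd2 (latticePotential K)) p
      = 4 * K ^ 2 * (1 - (sin (K * p.1) ^ 2 + sin (K * p.2) ^ 2)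
        - 2 * K ^ 2 * sin (K * p.1) ^ 2 * sin (K * p.2) ^ 2) / latticeDenom K p ^ 2 := by
  have hD := latticeDenom_ne_zero K p
  rw [pd2_pd2_latticePotential, pd1_pd1_latticePotential hK, pd1_pd1_latticePotential hK,
    latticeDenom_swap, Prod.fst_swap]
  simp only [sin_two_mul, mul_pow, cos_two_mul, cos_sq']
  field_simp
  unfold latticeDenom
  ring

lemma abs_laplacian_latticePotential_le (hK : K ≠ 0) (p : ℝ × ℝ) :
    |pd1 (pd1 (latticePotential K)) p + pd2 (pd2 (latticePotential K)) p|
      ≤ 4 * (latticeProfile K (K * p.1) * latticeProfile K (K * p.2)) + 2 := by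
  rw [laplacian_latticePotential hK, abs_div, abs_of_nonneg (sq_nonneg (latticeDenom K p)),
    latticeProfile, latticeProfile, div_mul_div_comm, ← pow_two]
  unfold latticeDenom
  have ha : sin (K * p.1) ^ 2 ≤ 1 := sin_sq_le_one _
  have hb : sin (K * p.2) ^ 2 ≤ 1 := sin_sq_le_one _
  have ha0 : 0 ≤ sin (K * p.1) ^ 2 := sq_nonneg _
  have hb0 : 0 ≤ sin (K * p.2) ^ 2 := sq_nonneg _
  generalize sin (K * p.1) ^ 2 = a at *
  generalize sin (K * p.2) ^ 2 = b at *
  have hK2 : 0 < K ^ 2 := by positivity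
  generalize K ^ 2 = k at *
  have hprod : (1 + k * a) * (1 + k * b) ≤ (1 + k * (a + b)) ^ 2 := by
    nlinarith [mul_nonneg hK2.le ha0, mul_nonneg hK2.le hb0,
      mul_nonneg (mul_nonneg hK2.le ha0) (mul_nonneg hK2.le hb0)]
  have hcross : 4 * (k * a) * (k * b) ≤ (1 + k * (a + b)) ^ 2 := by
    nlinarith [mul_nonneg hK2.le ha0, mul_nonneg hK2.le hb0, sq_nonneg (k * a - k * b)]
  have hnum : |4 * k * (1 - (a + b) - 2 * k * a * b)| ≤ 4 * k + 8 * (k * a) * (k * b) := by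
    rw [abs_le]
    constructor <;> nlinarith [mul_nonneg hK2.le ha0, mul_nonneg hK2.le hb0,
      mul_nonneg (mul_nonneg hK2.le ha0) (mul_nonneg hK2.le hb0)]
  calc |4 * k * (1 - (a + b) - 2 * k * a * b)| / (1 + k * (a + b)) ^ 2
      ≤ (4 * k + 8 * (k * a) * (k * b)) / (1 + k * (a + b)) ^ 2 := by gcongr
    _ = 4 * (k / (1 + k * (a + b)) ^ 2)
        + 2 * (4 * (k * a) * (k * b) / (1 + k * (a + b)) ^ 2) := by ring
    _ ≤ 4 * (k / ((1 + k * a) * (1 + k * b))) + 2 * 1 := by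
      gcongr
      exact div_le_one_of_le₀ hcross (by positivity)
    _ = _ := by ring

end LatticePotential

section LatticePotentialIntegrals

lemma integral_latticeProfile_le {K : ℝ} (hK : 0 < K) :
    ∫ u in -(π / 2)..π / 2, latticeProfile K u ≤ π ^ 2 / 2 := by
  have hπ := pi_pos
  set c : ℝ := 2 / π * K with hc
  have hc0 : 0 < c := by positivity
  have hcpos : ∀ u : ℝ, 0 < 1 + (c * u) ^ 2 := fun u => by positivity
  calc ∫ u in -(π / 2)..π / 2, latticeProfile K u
      ≤ ∫ u in -(π / 2)..π / 2, K * (1 / (1 + (c * u) ^ 2)) := by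
        refine intervalIntegral.integral_mono_on (by linarith) ?_ ?_ fun u hu => ?_
        · exact (continuous_latticeProfile K).intervalIntegrable _ _
        · exact (continuous_const.mul (continuous_const.div (by fun_prop)
            fun u => (hcpos u).ne')).intervalIntegrable _ _
        · have hjordan : 2 / π * |u| ≤ |sin u| := mul_abs_le_abs_sin (abs_le.2 hu)
          have hsq : (2 / π * u) ^ 2 ≤ sin u ^ 2 := by
            rw [← sq_abs (sin u), ← sq_abs (2 / π * u), abs_mul, abs_of_pos (by positivity)]
            gcongr
          rw [mul_one_div, latticeProfile]
          gcongr
          rw [hc, mul_right_comm, mul_comm, mul_pow]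
          gcongr
    _ = K * (c⁻¹ * (arctan (c * (π / 2)) - arctan (c * -(π / 2)))) := by
        rw [intervalIntegral.integral_const_mul,
          intervalIntegral.integral_comp_mul_left (fun v => 1 / (1 + v ^ 2)) hc0.ne',
          integral_one_div_one_add_sq, smul_eq_mul]
    _ ≤ K * (c⁻¹ * (π / 2 + π / 2)) := by
        gcongr
        linarith [arctan_lt_pi_div_two (c * (π / 2)), neg_pi_div_two_lt_arctan (c * -(π / 2))]
    _ = π ^ 2 / 2 := by
        rw [hc]
        field_simp
        ring

variable {N : ℕ}

lemma integral_latticeProfile_comp_mul_le (hN : N ≠ 0) :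
    ∫ x in (-3 : ℝ)..3, latticeProfile (π * N) (π * N * x) ≤ 3 * π := by
  set K : ℝ := π * N with hK
  have hK0 : 0 < K := by positivity
  have hper := periodic_latticeProfile K
  have hperiods : ∫ u in K * -3..K * 3, latticeProfile K u
      = 6 * N * ∫ u in -(π / 2)..π / 2, latticeProfile K u := by
    have hsum := hper.intervalIntegral_add_zsmul_eq (6 * N) (K * -3)
      fun _ _ => (continuous_latticeProfile K).intervalIntegrable _ _
    have hend : K * -3 + (6 * N : ℤ) • π = K * 3 := by
      rw [hK, zsmul_eq_mul]
      push_cast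
      ring
    rw [hend, zsmul_eq_mul, hper.intervalIntegral_add_eq (K * -3) (-(π / 2)),
      show -(π / 2) + π = π / 2 by ring] at hsum
    exact_mod_cast hsum
  calc ∫ x in (-3 : ℝ)..3, latticeProfile K (K * x)
      = K⁻¹ * (6 * N * ∫ u in -(π / 2)..π / 2, latticeProfile K u) := by
        rw [intervalIntegral.integral_comp_mul_left _ hK0.ne', hperiods, smul_eq_mul]
    _ ≤ K⁻¹ * (6 * N * (π ^ 2 / 2)) := by
        gcongr
        exact integral_latticeProfile_le hK0
    _ = 3 * π := by
        rw [hK]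
        field_simp
        ring

lemma setIntegral_abs_laplacian_latticePotential_le (hN : N ≠ 0) :
    ∫ p in Ioc (-3 : ℝ) 3 ×ˢ Ioc (-3 : ℝ) 3,
      |pd1 (pd1 (latticePotential (π * N))) p + pd2 (pd2 (latticePotential (π * N))) p|
      ≤ 36 * π ^ 2 + 72 := by
  have hK : π * N ≠ 0 := by positivity
  let q : ℝ → ℝ := fun x => latticeProfile (π * N) (π * N * x)
  have hqcont : Continuous q := (continuous_latticeProfile _).comp (continuous_const_mul _)
  have hq0 : 0 ≤ ∫ x in (-3 : ℝ)..3, q x :=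
    intervalIntegral.integral_nonneg (by norm_num) fun x _ =>
      latticeProfile_nonneg (by positivity) _
  have hq : ∫ x in (-3 : ℝ)..3, q x ≤ 3 * π := integral_latticeProfile_comp_mul_le hN
  calc ∫ p in Ioc (-3 : ℝ) 3 ×ˢ Ioc (-3 : ℝ) 3,
        |pd1 (pd1 (latticePotential (π * N))) p + pd2 (pd2 (latticePotential (π * N))) p|
      ≤ ∫ p in Ioc (-3 : ℝ) 3 ×ˢ Ioc (-3 : ℝ) 3, (4 * (q p.1 * q p.2) + 2) :=
        setIntegral_mono
          (integrableOn_Ioc_prod_Ioc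
            (continuous_pd1_pd1_add_pd2_pd2 (contDiff_latticePotential _)).abs _ _ _ _)
          (integrableOn_Ioc_prod_Ioc (by fun_prop) _ _ _ _)
          (abs_laplacian_latticePotential_le hK)
    _ = 4 * (∫ x in (-3 : ℝ)..3, q x) ^ 2 + 72 := by
        rw [setIntegral_Ioc_prod_Ioc_eq_intervalIntegral (by fun_prop) (by norm_num)
          (by norm_num), integral_integral_const_mul_mul_add_const hqcont]
        norm_num
    _ ≤ 4 * (3 * π) ^ 2 + 72 := by gcongr
    _ = 36 * π ^ 2 + 72 := by ring

lemma log_div_sq_pi_le_setIntegral_abs_pd2_pd1_latticePotential (hN : N ≠ 0) :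
    log ((1 + (π * N) ^ 2) / 2) / π ^ 2
      ≤ ∫ p in Ioc (0 : ℝ) 1 ×ˢ Ioc (0 : ℝ) 1, |pd2 (pd1 (latticePotential (π * N))) p| := by
  have hK : π * N ≠ 0 := by positivity
  have hhalf : π * N * (π / (π * N) / 2) = π / 2 := by field_simp
  have hone : N * (π / (π * N)) = 1 := by field_simp
  have hperiod := periodic_latticePotential hK
  have hcell := sq_mul_abs_mixed_difference_le_setIntegral_abs_pd2_pd1
    (contDiff_latticePotential (π * N)) (a := π / (π * N) / 2) (by positivity)
    (half_le_self (by positivity)) hperiod.1 hperiod.2 N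
  rw [hone] at hcell
  simp only [latticePotential, latticeDenom, hhalf, mul_zero, sin_pi_div_two, sin_zero] at hcell
  refine le_trans ?_ hcell
  set k : ℝ := (π * N) ^ 2 with hk
  have hk0 : 0 < k := by positivity
  have hlog : log ((1 + k) / 2) ≤ 2 * log (1 + k) - log (1 + k * 2) := by
    rw [le_sub_iff_add_le, ← log_mul (by positivity) (by positivity), two_mul,
      ← log_mul (by positivity) (by positivity)]
    exact log_le_log (by positivity) (by nlinarith)
  have hdiff : (2 * log (1 + k) - log (1 + k * 2)) / k ≤ |log (1 + k * 2) / k - log (1 + k) / k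
      - log (1 + k) / k| := by
    refine (le_of_eq ?_).trans (neg_le_abs _)
    ring
  calc log ((1 + k) / 2) / π ^ 2 = N ^ 2 * (log ((1 + k) / 2) / k) := by
        rw [hk]
        field_simp
    _ ≤ N ^ 2 * ((2 * log (1 + k) - log (1 + k * 2)) / k) := by gcongr
    _ ≤ N ^ 2 * |log (1 + k * 2) / k - log (1 + k) / k - log (1 + k) / k| := by gcongr
    _ = _ := by norm_num

lemma exists_potential_bounded_laplacian_le_mixed_derivative (M : ℝ) :
    ∃ L : ℝ × ℝ → ℝ, ContDiff ℝ ∞ L ∧ (∀ p, |pd1 L p| ≤ 1) ∧ (∀ p, |pd2 L p| ≤ 1) ∧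
      ∫ p in Ioc (-3 : ℝ) 3 ×ˢ Ioc (-3 : ℝ) 3, |pd1 (pd1 L) p + pd2 (pd2 L) p|
        ≤ 36 * π ^ 2 + 72 ∧
      M ≤ ∫ p in Ioc (0 : ℝ) 1 ×ˢ Ioc (0 : ℝ) 1, |pd2 (pd1 L) p| := by
  obtain ⟨N, hN⟩ := exists_nat_ge (exp (π ^ 2 * M))
  have hN0 : (0 : ℝ) < N := (exp_pos _).trans_le hN
  have hne : N ≠ 0 := by exact_mod_cast hN0.ne'
  have hK : π * N ≠ 0 := by positivity
  refine ⟨latticePotential (π * N), contDiff_latticePotential _,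
    abs_pd1_latticePotential_le_one hK, abs_pd2_latticePotential_le_one hK,
    setIntegral_abs_laplacian_latticePotential_le hne, le_trans ?_
    (log_div_sq_pi_le_setIntegral_abs_pd2_pd1_latticePotential hne)⟩
  rw [le_div_iff₀' (by positivity), le_log_iff_exp_le (by positivity)]
  refine hN.trans ?_
  nlinarith [sq_nonneg (π * N - 1), pi_gt_three]

end LatticePotentialIntegrals

section Profiles

variable {A B M : ℝ} {χ L : ℝ × ℝ → ℝ} {p : ℝ × ℝ}

/-- A smooth cutoff function `χ` of the square `[-1, 1]²`, with first partial derivatives bounded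
by `A`. Balls are squares, since `ℝ × ℝ` carries the maximum norm. -/
structure IsCutoff (A : ℝ) (χ : ℝ × ℝ → ℝ) : Prop where
  contDiff : ContDiff ℝ ∞ χ
  nonneg : ∀ p, 0 ≤ χ p
  le_one : ∀ p, χ p ≤ 1
  tsupport_subset : tsupport χ ⊆ Metric.closedBall 0 2
  eventuallyEq_one : ∀ p ∈ Metric.closedBall (0 : ℝ × ℝ) 1, χ =ᶠ[𝓝 p] 1
  abs_pd1_le : ∀ p, |pd1 χ p| ≤ A
  abs_pd2_le : ∀ p, |pd2 χ p| ≤ A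

/-- The pieces of the construction: a density `f` and a stream function `g`, both supported in the
ball of radius `R`, such that `f` and `gradAddSkewGrad f g` have `L¹` norm at most `C` while `∂₂f`
has `L¹` norm at least `M`. -/
structure IsProfile (R C M : ℝ) (f g : ℝ × ℝ → ℝ) : Prop where
  contDiff_density : ContDiff ℝ ∞ f
  contDiff_stream : ContDiff ℝ ∞ g
  tsupport_density_subset : tsupport f ⊆ Metric.closedBall 0 R
  tsupport_stream_subset : tsupport g ⊆ Metric.closedBall 0 R
  nonneg : ∀ p, 0 ≤ f p
  integral_density_le : ∫ p, f p ≤ C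
  integral_norm_field_le : ∫ p, ‖gradAddSkewGrad f g p‖ ≤ C
  le_integral_abs_pd2 : M ≤ ∫ p, |pd2 f p|

/-- The density `χ (1 + ∂₁L)` cut out of the potential `L` by the cutoff `χ`, nonnegative as soon
as `|∂₁L| ≤ 1`. -/
def localizedDensity (χ L : ℝ × ℝ → ℝ) (p : ℝ × ℝ) : ℝ := χ p * (1 + pd1 L p)

/-- The stream function `χ ∂₂L` matching `localizedDensity χ L`: where `χ = 1` the field they
generate is `(ΔL, 0)`. -/
def localizedStream (χ L : ℝ × ℝ → ℝ) (p : ℝ × ℝ) : ℝ := χ p * pd2 L p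

lemma exists_isCutoff : ∃ A χ, IsCutoff A χ := by
  let χ : ContDiffBump (0 : ℝ × ℝ) := ⟨3 / 2, 2, by norm_num, by norm_num⟩
  have hχ : ContDiff ℝ 1 χ := χ.contDiff
  obtain ⟨A₁, hA₁⟩ := (contDiff_pd1 (m := 0) hχ (by norm_num)).continuous
    |>.bounded_above_of_compact_support (χ.hasCompactSupport.fderiv_apply ℝ _)
  obtain ⟨A₂, hA₂⟩ := (contDiff_pd2 (m := 0) hχ (by norm_num)).continuous
    |>.bounded_above_of_compact_support (χ.hasCompactSupport.fderiv_apply ℝ _)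
  exact ⟨max A₁ A₂, χ,
    { contDiff := χ.contDiff
      nonneg := fun _ => χ.nonneg
      le_one := fun _ => χ.le_one
      tsupport_subset := χ.tsupport_eq.subset
      eventuallyEq_one := fun p hp => χ.eventuallyEq_one_of_mem_ball <|
        Metric.closedBall_subset_ball (by norm_num : (1 : ℝ) < 3 / 2) hp
      abs_pd1_le := fun p => (hA₁ p).trans (le_max_left _ _)
      abs_pd2_le := fun p => (hA₂ p).trans (le_max_right _ _) }⟩

lemma contDiff_localizedDensity (hχ : ContDiff ℝ ∞ χ) (hL : ContDiff ℝ ∞ L) :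
    ContDiff ℝ ∞ (localizedDensity χ L) :=
  hχ.mul (contDiff_const.add (contDiff_pd1 hL le_rfl))

lemma contDiff_localizedStream (hχ : ContDiff ℝ ∞ χ) (hL : ContDiff ℝ ∞ L) :
    ContDiff ℝ ∞ (localizedStream χ L) :=
  hχ.mul (contDiff_pd2 hL le_rfl)

lemma tsupport_localizedDensity_subset (hχ : IsCutoff A χ) (L : ℝ × ℝ → ℝ) :
    tsupport (localizedDensity χ L) ⊆ Metric.closedBall 0 2 :=
  (tsupport_mul_subset_left (f := χ)).trans hχ.tsupport_subset

lemma tsupport_localizedStream_subset (hχ : IsCutoff A χ) (L : ℝ × ℝ → ℝ) :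
    tsupport (localizedStream χ L) ⊆ Metric.closedBall 0 2 :=
  (tsupport_mul_subset_left (f := χ)).trans hχ.tsupport_subset

lemma pd2_localizedDensity_of_eventuallyEq_one (hχ : χ =ᶠ[𝓝 p] 1) :
    pd2 (localizedDensity χ L) p = pd2 (pd1 L) p := by
  have hf : localizedDensity χ L =ᶠ[𝓝 p] fun q => 1 + pd1 L q :=
    hχ.mono fun q hq => by rw [localizedDensity, hq, Pi.one_apply, one_mul]
  rw [pd2, hf.fderiv_eq, fderiv_const_add, pd2]

lemma gradAddSkewGrad_localized (hχ : ContDiff ℝ 1 χ) (hL : ContDiff ℝ 2 L) (p : ℝ × ℝ) :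
    gradAddSkewGrad (localizedDensity χ L) (localizedStream χ L) p
      = (χ p * (pd1 (pd1 L) p + pd2 (pd2 L) p) + pd1 χ p * (1 + pd1 L p) + pd2 χ p * pd2 L p,
        pd2 χ p * (1 + pd1 L p) - pd1 χ p * pd2 L p) := by
  have hχp : DifferentiableAt ℝ χ p := hχ.differentiable one_ne_zero p
  have hL1 : DifferentiableAt ℝ (pd1 L) p :=
    (contDiff_pd1 (m := 1) hL (by norm_num)).differentiable one_ne_zero p
  have hL2 : DifferentiableAt ℝ (pd2 L) p :=
    (contDiff_pd2 (m := 1) hL (by norm_num)).differentiable one_ne_zero p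
  have hpd1 : pd1 (fun q => 1 + pd1 L q) p = pd1 (pd1 L) p := by rw [pd1, fderiv_const_add, pd1]
  have hpd2 : pd2 (fun q => 1 + pd1 L q) p = pd2 (pd1 L) p := by rw [pd2, fderiv_const_add, pd2]
  unfold gradAddSkewGrad localizedDensity localizedStream
  rw [pd1_mul hχp (hL1.const_add 1), pd2_mul hχp (hL1.const_add 1), pd1_mul hχp hL2,
    pd2_mul hχp hL2, pd1_pd2_comm hL, hpd1, hpd2]
  ext <;> ring

lemma norm_gradAddSkewGrad_localized_le (hχ : IsCutoff A χ) (hL : ContDiff ℝ 2 L)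
    (hL1 : |pd1 L p| ≤ 1) (hL2 : |pd2 L p| ≤ 1) :
    ‖gradAddSkewGrad (localizedDensity χ L) (localizedStream χ L) p‖
      ≤ |pd1 (pd1 L) p + pd2 (pd2 L) p| + 3 * A := by
  have hA : 0 ≤ A := (abs_nonneg _).trans (hχ.abs_pd1_le p)
  have hmain : |χ p * (pd1 (pd1 L) p + pd2 (pd2 L) p)| ≤ |pd1 (pd1 L) p + pd2 (pd2 L) p| := by
    rw [abs_mul, abs_of_nonneg (hχ.nonneg p)]
    exact mul_le_of_le_one_left (abs_nonneg _) (hχ.le_one p)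
  have hone : |1 + pd1 L p| ≤ 2 := (abs_add_le _ _).trans (by rw [abs_one]; linarith)
  have mul_one_add_le {a : ℝ} (ha : |a| ≤ A) : |a * (1 + pd1 L p)| ≤ 2 * A := by
    rw [abs_mul, mul_comm 2 A]
    gcongr
  have mul_pd2_le {a : ℝ} (ha : |a| ≤ A) : |a * pd2 L p| ≤ A := by
    rw [abs_mul, ← mul_one A]
    gcongr
  have h11 := mul_one_add_le (hχ.abs_pd1_le p)
  have h21 := mul_one_add_le (hχ.abs_pd2_le p)
  have h12 := mul_pd2_le (hχ.abs_pd1_le p)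
  have h22 := mul_pd2_le (hχ.abs_pd2_le p)
  rw [gradAddSkewGrad_localized (hχ.contDiff.of_le (by simp)) hL]
  refine max_le ((abs_add_three _ _ _).trans (by linarith)) ((abs_sub _ _).trans ?_)
  linarith [abs_nonneg (pd1 (pd1 L) p + pd2 (pd2 L) p)]

lemma closedBall_subset_square :
    Metric.closedBall (0 : ℝ × ℝ) 2 ⊆ Ioc (-3 : ℝ) 3 ×ˢ Ioc (-3 : ℝ) 3 := by
  have hIcc : Icc (-2 : ℝ) 2 ⊆ Ioc (-3 : ℝ) 3 := Icc_subset_Ioc (by norm_num) (by norm_num)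
  rw [← Prod.mk_zero_zero, ← closedBall_prod_same, Real.closedBall_eq_Icc, zero_sub, zero_add]
  exact prod_mono hIcc hIcc

lemma integral_le_setIntegral_square_add_const {h w : ℝ × ℝ → ℝ} {c : ℝ} (hh : Continuous h)
    (hw : Continuous w) (hsupp : support h ⊆ Metric.closedBall 0 2)
    (hle : ∀ p, h p ≤ w p + c) :
    ∫ p, h p ≤ (∫ p in Ioc (-3 : ℝ) 3 ×ˢ Ioc (-3 : ℝ) 3, w p) + 36 * c := by
  have hvol : volume.real (Ioc (-3 : ℝ) 3 ×ˢ Ioc (-3 : ℝ) 3) = 36 := by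
    rw [Measure.volume_eq_prod, measureReal_prod_prod, Real.volume_real_Ioc]
    norm_num
  calc ∫ p, h p = ∫ p in Ioc (-3 : ℝ) 3 ×ˢ Ioc (-3 : ℝ) 3, h p :=
        (setIntegral_eq_integral_of_forall_compl_eq_zero fun p hp =>
          notMem_support.1 fun hps => hp (closedBall_subset_square (hsupp hps))).symm
    _ ≤ ∫ p in Ioc (-3 : ℝ) 3 ×ˢ Ioc (-3 : ℝ) 3, (w p + c) :=
        setIntegral_mono (integrableOn_Ioc_prod_Ioc hh _ _ _ _)
          (integrableOn_Ioc_prod_Ioc (hw.add continuous_const) _ _ _ _) hle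
    _ = _ := by
        rw [integral_add (integrableOn_Ioc_prod_Ioc hw _ _ _ _)
          (integrableOn_Ioc_prod_Ioc continuous_const _ _ _ _), setIntegral_const, hvol,
          smul_eq_mul]

lemma setIntegral_abs_pd2_pd1_le_integral_abs_pd2_localizedDensity (hχ : IsCutoff A χ)
    (hL : ContDiff ℝ ∞ L) :
    ∫ p in Ioc (0 : ℝ) 1 ×ˢ Ioc (0 : ℝ) 1, |pd2 (pd1 L) p|
      ≤ ∫ p, |pd2 (localizedDensity χ L) p| := by
  have hpd2 : Continuous (pd2 (localizedDensity χ L)) :=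
    (contDiff_pd2 (m := ∞) (contDiff_localizedDensity hχ.contDiff hL) le_rfl).continuous
  have hcompact : HasCompactSupport (pd2 (localizedDensity χ L)) :=
    .of_support_subset_isCompact (isCompact_closedBall 0 2) <|
      (support_pd2_subset_tsupport _).trans (tsupport_localizedDensity_subset hχ L)
  have hunit : Ioc (0 : ℝ) 1 ×ˢ Ioc (0 : ℝ) 1 ⊆ Metric.closedBall 0 1 := by
    have hIoc : Ioc (0 : ℝ) 1 ⊆ Icc (-1) 1 := fun x hx => ⟨by linarith [hx.1], hx.2⟩
    rw [← Prod.mk_zero_zero, ← closedBall_prod_same, Real.closedBall_eq_Icc, zero_sub, zero_add]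
    exact prod_mono hIoc hIoc
  rw [← setIntegral_congr_fun (measurableSet_Ioc.prod measurableSet_Ioc) fun p hp => congrArg abs
    (pd2_localizedDensity_of_eventuallyEq_one (hχ.eventuallyEq_one p (hunit hp)))]
  exact setIntegral_le_integral (hpd2.integrable_of_hasCompactSupport hcompact).abs
    (Eventually.of_forall fun p => abs_nonneg _)

lemma isProfile_localized (hχ : IsCutoff A χ) (hL : ContDiff ℝ ∞ L) (hL1 : ∀ p, |pd1 L p| ≤ 1)
    (hL2 : ∀ p, |pd2 L p| ≤ 1)
    (hB : ∫ p in Ioc (-3 : ℝ) 3 ×ˢ Ioc (-3 : ℝ) 3, |pd1 (pd1 L) p + pd2 (pd2 L) p| ≤ B)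
    (hM : M ≤ ∫ p in Ioc (0 : ℝ) 1 ×ˢ Ioc (0 : ℝ) 1, |pd2 (pd1 L) p|) :
    IsProfile 2 (max 72 (B + 108 * A)) M (localizedDensity χ L) (localizedStream χ L) := by
  have hf := contDiff_localizedDensity hχ.contDiff hL
  have hg := contDiff_localizedStream hχ.contDiff hL
  have hftsupp := tsupport_localizedDensity_subset hχ L
  have hgtsupp := tsupport_localizedStream_subset hχ L
  refine ⟨hf, hg, hftsupp, hgtsupp, fun p => ?_, le_max_of_le_left ?_, le_max_of_le_right ?_,
    hM.trans ?_⟩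
  · exact mul_nonneg (hχ.nonneg p) (by linarith [neg_le_of_abs_le (hL1 p)])
  · have hle : ∀ p, localizedDensity χ L p ≤ 0 + 2 := fun p =>
      (mul_le_of_le_one_left (by linarith [neg_le_of_abs_le (hL1 p)]) (hχ.le_one p)).trans
        (by linarith [le_of_abs_le (hL1 p)])
    refine (integral_le_setIntegral_square_add_const hf.continuous continuous_const
      ((subset_tsupport _).trans hftsupp) hle).trans ?_
    norm_num
  · have hfield : Continuous (gradAddSkewGrad (localizedDensity χ L) (localizedStream χ L)) :=
      (contDiff_gradAddSkewGrad (m := ∞) hf hg le_rfl).continuous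
    have hsupp := support_gradAddSkewGrad_subset hftsupp hgtsupp
    have hL2d : ContDiff ℝ 2 L := contDiff_infty.1 hL 2
    refine (integral_le_setIntegral_square_add_const hfield.norm
      (continuous_pd1_pd1_add_pd2_pd2 hL2d).abs (fun p hp => hsupp (norm_ne_zero_iff.1 hp))
      fun p => norm_gradAddSkewGrad_localized_le hχ hL2d (hL1 p) (hL2 p)).trans ?_
    linarith
  · exact setIntegral_abs_pd2_pd1_le_integral_abs_pd2_localizedDensity hχ hL

lemma exists_isProfile : ∃ C, ∀ M, ∃ f g, IsProfile 2 C M f g := by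
  obtain ⟨A, χ, hχ⟩ := exists_isCutoff
  refine ⟨max 72 (36 * π ^ 2 + 72 + 108 * A), fun M => ?_⟩
  obtain ⟨L, hL, hL1, hL2, hB, hM⟩ := exists_potential_bounded_laplacian_le_mixed_derivative M
  exact ⟨_, _, isProfile_localized hχ hL hL1 hL2 hB hM⟩

end Profiles

section TranslateSum

/-- The superposition `∑ₖ cₖ fₖ(· - xₖ)` of weighted translates, for translates with locally finite
supports. -/
def translateSum {ι E : Type*} [Sub E] (c : ι → ℝ) (x : ι → E) (f : ι → E → ℝ) (p : E) : ℝ :=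
  ∑' k, c k * f k (p - x k)

variable {ι : Type*} {c : ι → ℝ} {x : ι → ℝ × ℝ} {f g : ι → ℝ × ℝ → ℝ} {R δ : ℝ}

lemma locallyFinite_support_mul_comp_sub (hδ : 0 < δ)
    (hx : Pairwise fun i j => 2 * R + δ ≤ dist (x i) (x j))
    (hf : ∀ k, tsupport (f k) ⊆ Metric.closedBall 0 R) (c : ι → ℝ) :
    LocallyFinite fun k => support fun p => c k * f k (p - x k) :=
  locallyFinite_support_smul_comp_sub hδ hx (fun k => (subset_tsupport (f k)).trans (hf k)) c

lemma contDiff_translateSum {n : ℕ∞ω} (hδ : 0 < δ)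
    (hx : Pairwise fun i j => 2 * R + δ ≤ dist (x i) (x j))
    (hf : ∀ k, tsupport (f k) ⊆ Metric.closedBall 0 R) (hn : ∀ k, ContDiff ℝ n (f k)) :
    ContDiff ℝ n (translateSum c x f) :=
  contDiff_tsum_of_locallyFinite (locallyFinite_support_mul_comp_sub hδ hx hf c)
    fun k => contDiff_const.mul ((hn k).comp (contDiff_id.sub contDiff_const))

lemma hasSum_translateSum (hδ : 0 < δ) (hx : Pairwise fun i j => 2 * R + δ ≤ dist (x i) (x j))
    (hf : ∀ k, tsupport (f k) ⊆ Metric.closedBall 0 R) (p : ℝ × ℝ) :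
    HasSum (fun k => c k * f k (p - x k)) (translateSum c x f p) :=
  hasSum_tsum_of_locallyFinite (locallyFinite_support_mul_comp_sub hδ hx hf c) p

lemma hasSum_fderiv_translateSum (hδ : 0 < δ)
    (hx : Pairwise fun i j => 2 * R + δ ≤ dist (x i) (x j))
    (hf : ∀ k, tsupport (f k) ⊆ Metric.closedBall 0 R) (hd : ∀ k, Differentiable ℝ (f k))
    (p : ℝ × ℝ) :
    HasSum (fun k => fderiv ℝ (fun q => c k * f k (q - x k)) p)
      (fderiv ℝ (translateSum c x f) p) :=
  hasSum_fderiv_of_locallyFinite (locallyFinite_support_mul_comp_sub hδ hx hf c)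
    (fun k => ((hd k).comp (differentiable_id.sub_const (x k))).const_mul (c k)) p

lemma hasSum_pd1_translateSum (hδ : 0 < δ)
    (hx : Pairwise fun i j => 2 * R + δ ≤ dist (x i) (x j))
    (hf : ∀ k, tsupport (f k) ⊆ Metric.closedBall 0 R) (hd : ∀ k, Differentiable ℝ (f k))
    (p : ℝ × ℝ) :
    HasSum (fun k => c k * pd1 (f k) (p - x k)) (pd1 (translateSum c x f) p) := by
  simp_rw [← pd1_const_mul_comp_sub]
  exact (hasSum_fderiv_translateSum hδ hx hf hd p).mapL (ContinuousLinearMap.apply ℝ ℝ (1, 0))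

lemma hasSum_pd2_translateSum (hδ : 0 < δ)
    (hx : Pairwise fun i j => 2 * R + δ ≤ dist (x i) (x j))
    (hf : ∀ k, tsupport (f k) ⊆ Metric.closedBall 0 R) (hd : ∀ k, Differentiable ℝ (f k))
    (p : ℝ × ℝ) :
    HasSum (fun k => c k * pd2 (f k) (p - x k)) (pd2 (translateSum c x f) p) := by
  simp_rw [← pd2_const_mul_comp_sub]
  exact (hasSum_fderiv_translateSum hδ hx hf hd p).mapL (ContinuousLinearMap.apply ℝ ℝ (0, 1))

lemma hasSum_gradAddSkewGrad_translateSum (hδ : 0 < δ)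
    (hx : Pairwise fun i j => 2 * R + δ ≤ dist (x i) (x j))
    (hf : ∀ k, tsupport (f k) ⊆ Metric.closedBall 0 R) (hdf : ∀ k, Differentiable ℝ (f k))
    (hg : ∀ k, tsupport (g k) ⊆ Metric.closedBall 0 R) (hdg : ∀ k, Differentiable ℝ (g k))
    (p : ℝ × ℝ) :
    HasSum (fun k => c k • gradAddSkewGrad (f k) (g k) (p - x k))
      (gradAddSkewGrad (translateSum c x f) (translateSum c x g) p) := by
  simp only [gradAddSkewGrad, Prod.smul_mk, smul_eq_mul, mul_add, mul_sub]
  exact ((hasSum_pd1_translateSum hδ hx hf hdf p).add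
      (hasSum_pd2_translateSum hδ hx hg hdg p)).prodMk
    ((hasSum_pd2_translateSum hδ hx hf hdf p).sub (hasSum_pd1_translateSum hδ hx hg hdg p))

end TranslateSum

section ProfileSum

variable {R C M : ℝ} {f g : ℝ × ℝ → ℝ}

lemma IsProfile.integrable_density (h : IsProfile R C M f g) : Integrable f :=
  h.contDiff_density.continuous.integrable_of_hasCompactSupport
    ((isCompact_closedBall 0 R).of_isClosed_subset (isClosed_tsupport f) h.tsupport_density_subset)

lemma IsProfile.integrable_pd2 (h : IsProfile R C M f g) : Integrable (pd2 f) :=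
  (contDiff_pd2 (m := ∞) h.contDiff_density le_rfl).continuous.integrable_of_hasCompactSupport <|
    .of_support_subset_isCompact (isCompact_closedBall 0 R)
      ((support_pd2_subset_tsupport f).trans h.tsupport_density_subset)

lemma IsProfile.support_field_subset (h : IsProfile R C M f g) :
    support (gradAddSkewGrad f g) ⊆ Metric.closedBall 0 R :=
  support_gradAddSkewGrad_subset h.tsupport_density_subset h.tsupport_stream_subset

lemma IsProfile.integrable_field (h : IsProfile R C M f g) : Integrable (gradAddSkewGrad f g) :=
  (contDiff_gradAddSkewGrad (m := ∞) h.contDiff_density h.contDiff_stream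
    le_rfl).continuous.integrable_of_hasCompactSupport
      (.of_support_subset_isCompact (isCompact_closedBall 0 R) h.support_field_subset)

variable {ι : Type*} [Countable ι] {c m : ι → ℝ} {x : ι → ℝ × ℝ} {r s : ι → ℝ × ℝ → ℝ} {δ : ℝ}

lemma integrable_translateSum_of_isProfile (hδ : 0 < δ)
    (hx : Pairwise fun i j => 2 * R + δ ≤ dist (x i) (x j))
    (h : ∀ k, IsProfile R C (m k) (r k) (s k)) (hc : Summable fun k => |c k|) :
    Integrable (translateSum c x r) := by
  have hsum := hasSum_translateSum (c := c) hδ hx fun k => (h k).tsupport_density_subset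
  refine (integrable_iff_summable_of_hasSum_smul_comp_sub hδ hx
    (fun k => (h k).integrable_density)
    (fun k => (subset_tsupport _).trans (h k).tsupport_density_subset) hsum).2 ?_
  refine (hc.mul_right C).of_nonneg_of_le (fun k => by positivity) fun k => ?_
  gcongr
  simpa only [Real.norm_of_nonneg ((h k).nonneg _)] using (h k).integral_density_le

lemma integrable_gradAddSkewGrad_translateSum_of_isProfile (hδ : 0 < δ)
    (hx : Pairwise fun i j => 2 * R + δ ≤ dist (x i) (x j))
    (h : ∀ k, IsProfile R C (m k) (r k) (s k)) (hc : Summable fun k => |c k|) :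
    Integrable (gradAddSkewGrad (translateSum c x r) (translateSum c x s)) := by
  have hsum := hasSum_gradAddSkewGrad_translateSum (c := c) hδ hx
    (fun k => (h k).tsupport_density_subset)
    (fun k => (h k).contDiff_density.differentiable (by simp))
    (fun k => (h k).tsupport_stream_subset)
    (fun k => (h k).contDiff_stream.differentiable (by simp))
  refine (integrable_iff_summable_of_hasSum_smul_comp_sub hδ hx
    (fun k => (h k).integrable_field) (fun k => (h k).support_field_subset) hsum).2 ?_
  refine (hc.mul_right C).of_nonneg_of_le (fun k => by positivity) fun k => ?_
  gcongr
  exact (h k).integral_norm_field_le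

lemma summable_mul_of_integrable_pd2_translateSum (hδ : 0 < δ)
    (hx : Pairwise fun i j => 2 * R + δ ≤ dist (x i) (x j))
    (h : ∀ k, IsProfile R C (m k) (r k) (s k)) (hm : ∀ k, 0 ≤ m k)
    (hint : Integrable (pd2 (translateSum c x r))) : Summable fun k => |c k| * m k := by
  have hsum := hasSum_pd2_translateSum (c := c) hδ hx
    (fun k => (h k).tsupport_density_subset)
    (fun k => (h k).contDiff_density.differentiable (by simp))
  have hsummable := (integrable_iff_summable_of_hasSum_smul_comp_sub hδ hx
    (fun k => (h k).integrable_pd2)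
    (fun k => (support_pd2_subset_tsupport _).trans (h k).tsupport_density_subset) hsum).1 hint
  refine hsummable.of_nonneg_of_le (fun k => mul_nonneg (abs_nonneg _) (hm k)) fun k => ?_
  gcongr
  exact (h k).le_integral_abs_pd2

lemma exists_smooth_integrable_field_not_integrable_pd2 :
    ∃ r s : ℝ × ℝ → ℝ, ContDiff ℝ ∞ r ∧ ContDiff ℝ ∞ s ∧ (∀ p, 0 ≤ r p) ∧ Integrable r ∧
      Integrable (gradAddSkewGrad r s) ∧ ¬ Integrable (pd2 r) := by
  obtain ⟨C, hC⟩ := exists_isProfile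
  choose f g hfg using fun k : ℕ => hC (2 ^ k)
  let c : ℕ → ℝ := fun k => (1 / 2) ^ k
  have hc : Summable fun k => |c k| := summable_geometric_two.abs
  let x : ℕ → ℝ × ℝ := fun k => (5 * k, 0)
  have hx : Pairwise fun i j => 2 * 2 + 1 ≤ dist (x i) (x j) := fun i j hij => by
    have hdist : (1 : ℝ) ≤ dist (i : ℝ) j := by
      rw [Nat.dist_cast_real]
      exact Nat.pairwise_one_le_dist hij
    refine le_trans ?_ (le_max_left _ _)
    rw [Real.dist_eq] at hdist ⊢
    rw [← mul_sub, abs_mul]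
    norm_num
    linarith
  have hf := fun k => (hfg k).tsupport_density_subset
  refine ⟨translateSum c x f, translateSum c x g,
    contDiff_translateSum one_pos hx hf fun k => (hfg k).contDiff_density,
    contDiff_translateSum one_pos hx (fun k => (hfg k).tsupport_stream_subset)
      fun k => (hfg k).contDiff_stream,
    fun p => tsum_nonneg fun k => mul_nonneg (by positivity) ((hfg k).nonneg _),
    integrable_translateSum_of_isProfile one_pos hx hfg hc,
    integrable_gradAddSkewGrad_translateSum_of_isProfile one_pos hx hfg hc, fun hint => ?_⟩
  have hsum := summable_mul_of_integrable_pd2_translateSum one_pos hx hfg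
    (fun k => by positivity) hint
  have hone : ∀ k, |c k| * 2 ^ k = 1 := fun k => by simp [c, abs_of_pos]
  simp_rw [hone] at hsum
  exact one_ne_zero ((summable_const_iff (β := ℕ) (1 : ℝ)).1 hsum)

end ProfileSum

section Normalization

lemma emag_le_abs_add_abs (v : ℝ × ℝ) : emag v ≤ |v.1| + |v.2| :=
  Real.sqrt_le_iff.2 ⟨by positivity, by
    nlinarith [sq_abs v.1, sq_abs v.2, mul_nonneg (abs_nonneg v.1) (abs_nonneg v.2)]⟩

lemma abs_snd_le_emag (v : ℝ × ℝ) : |v.2| ≤ emag v :=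
  Real.abs_le_sqrt (le_add_of_nonneg_left (sq_nonneg v.1))

lemma continuous_emag : Continuous emag := by
  unfold emag
  fun_prop

lemma integrable_emag {α : Type*} [MeasurableSpace α] {μ : Measure α} {w : α → ℝ × ℝ}
    (hw : Integrable w μ) : Integrable (fun p => emag (w p)) μ := by
  refine (hw.fst.abs.add hw.snd.abs).mono'
    (continuous_emag.comp_aestronglyMeasurable hw.aestronglyMeasurable) ?_
  exact Eventually.of_forall fun p =>
    (Real.norm_of_nonneg (Real.sqrt_nonneg _)).trans_le (emag_le_abs_add_abs (w p))

lemma integrable_snd_of_integrable_emag {α : Type*} [MeasurableSpace α] {μ : Measure α}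
    {u v : α → ℝ} (hv : AEStronglyMeasurable v μ) (h : Integrable (fun p => emag (u p, v p)) μ) :
    Integrable v μ :=
  h.mono' hv (Eventually.of_forall fun p => abs_snd_le_emag (u p, v p))

lemma exists_smooth_density_integrable_field_not_integrable_pd2 :
    ∃ r s : ℝ × ℝ → ℝ, ContDiff ℝ ∞ r ∧ ContDiff ℝ ∞ s ∧ (∀ p, 0 ≤ r p) ∧ ∫ p, r p = 1 ∧
      Integrable (gradAddSkewGrad r s) ∧ ¬ Integrable (pd2 r) := by
  obtain ⟨r, s, hr, hs, hr0, hrint, hfield, hgrad⟩ :=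
    exists_smooth_integrable_field_not_integrable_pd2
  have hne : r ≠ 0 := by
    rintro rfl
    refine hgrad ((integrable_zero _ ℝ volume).congr (Eventually.of_forall fun p => ?_))
    simp [pd2]
  have hpos : 0 < ∫ p, r p := (integral_pos_iff_support_of_nonneg hr0 hrint).2
    (hr.continuous.isOpen_support.measure_pos volume (support_nonempty_iff.2 hne))
  have hfield_mul := fun p => gradAddSkewGrad_const_mul_comp_sub (∫ q, r q)⁻¹ r s 0 p
  have hpd2_mul := fun p => pd2_const_mul_comp_sub (∫ q, r q)⁻¹ r 0 p
  simp only [sub_zero] at hfield_mul hpd2_mul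
  refine ⟨fun p => (∫ q, r q)⁻¹ * r p, fun p => (∫ q, r q)⁻¹ * s p, contDiff_const.mul hr,
    contDiff_const.mul hs, fun p => mul_nonneg (inv_nonneg.2 hpos.le) (hr0 p), ?_, ?_, ?_⟩
  · rw [integral_const_mul, inv_mul_cancel₀ hpos.ne']
  · rw [funext hfield_mul]
    exact hfield.smul (∫ q, r q)⁻¹
  · rwa [funext hpd2_mul, integrable_const_mul_iff (inv_ne_zero hpos.ne').isUnit]

end Normalization

/-- There exist a probability density `ϱ ∈ C^∞(ℝ²)` and a `C^∞` vector field `v : ℝ² → ℝ²`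
such that `|v| ∈ L¹(ℝ²)` and `Δϱ = div v` in the sense of distributions
(`∫ ϱ Δφ = -∫ ⟨v, ∇φ⟩` for all test functions `φ`), but `|∇ϱ| ∉ L¹(ℝ²)`. -/
theorem smooth_density_laplace_eq_div_not_W11 :
    ∃ (ϱ : ℝ × ℝ → ℝ) (v : ℝ × ℝ → ℝ × ℝ),
      ContDiff ℝ (⊤ : ℕ∞) ϱ ∧ (∀ p, 0 ≤ ϱ p) ∧ (∫ p, ϱ p = 1) ∧
      ContDiff ℝ (⊤ : ℕ∞) v ∧
      Integrable (fun p => emag (v p)) ∧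
      (∀ φ : ℝ × ℝ → ℝ, IsTest φ →
        ∫ p, ϱ p * (pd1 (pd1 φ) p + pd2 (pd2 φ) p) = - ∫ p, fderiv ℝ φ p (v p)) ∧
      ¬ Integrable (fun p => emag (pd1 ϱ p, pd2 ϱ p)) := by
  obtain ⟨r, s, hr, hs, hr0, hr1, hfield, hgrad⟩ :=
    exists_smooth_density_integrable_field_not_integrable_pd2
  have hpd2 : ContDiff ℝ ∞ (pd2 r) := contDiff_pd2 hr le_rfl
  refine ⟨r, gradAddSkewGrad r s, hr, hr0, hr1, contDiff_gradAddSkewGrad hr hs le_rfl,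
    integrable_emag hfield, fun φ hφ => ?_, fun h => hgrad ?_⟩
  · exact integral_mul_laplacian_eq_neg_integral_fderiv_gradAddSkewGrad
      (contDiff_infty.1 hr 1) (contDiff_infty.1 hs 1) (contDiff_infty.1 hφ.1 2) hφ.2
  · exact integrable_snd_of_integrable_emag hpd2.continuous.aestronglyMeasurable h
end
end
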